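/- arXiv:1007.5458 — 3 statements merged into one kernel-verified Lean document; each statement's English description precedes it below -/
import Mathlib

section
/- Let V_0, …, V_n be K-vector spaces with linear maps d : V_m → V_{m-1} satisfying d∘d = 0. Define L_m = V_0 × ⋯ × V_m, s(v_0,…,v_m) = (v_0,…,v_{m-1}), t(v_0,…,v_m) = (v_0,…,v_{m-1} + d v_m), 1_{(v_0,…,v_m)} = (v_0,…,v_m,0), and, for pairs with t^{m-p}(v) = s^{m-p}(w), (v_0,…,v_m) ∘_p (w_0,…,w_m) = (v_0,…,v_p, v_{p+1}+w_{p+1}, …, v_m+w_m). These data form a linear n-category: the globular identities s∘s = s∘t, t∘s = t∘t hold; s(a ∘_{m-1} b) = s(a) and t(a ∘_{m-1} b) = t(b); s(a ∘_p b) = s(a) ∘_p s(b) and t(a ∘_p b) = t(a) ∘_p t(b) for p ≤ m-2; each ∘_p is associative and satisfies the unit laws; the interchange law (a ∘_p b) ∘_q (c ∘_p d) = (a ∘_q c) ∘_p (b ∘_q d) holds for q < p on composable cells; and 1_{a ∘_p b} = 1_a ∘_p 1_b. -/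
/- The explicit model: L_m = V_0 × ⋯ × V_m with
   s(v_0,…,v_m) = (v_0,…,v_{m-1}),  t(v_0,…,v_m) = (v_0,…,v_{m-1} + d v_m),
   1_{(v_0,…,v_m)} = (v_0,…,v_m,0),
   (v ∘_p w) = (v_0,…,v_p, v_{p+1}+w_{p+1}, …, v_m+w_m). -/

namespace GlobModel

variable {K : Type} [Field K] {V : ℕ → Type} [∀ i, AddCommGroup (V i)]
  [∀ i, Module K (V i)]

/-- The space of `m`-cells `L_m = V_0 × ⋯ × V_m`. -/
abbrev Cells (V : ℕ → Type) (m : ℕ) : Type := ∀ i : Fin (m + 1), V i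

/-- Source map `s (v_0,…,v_m) = (v_0,…,v_{m-1})`. -/
def smap (m : ℕ) (v : Cells V (m + 1)) : Cells V m := fun i => v ⟨i.val, by omega⟩

/-- Target map `t (v_0,…,v_m) = (v_0,…,v_{m-1} + d v_m)`. -/
def tmap (d : ∀ i, V (i + 1) →ₗ[K] V i) (m : ℕ) (v : Cells V (m + 1)) : Cells V m :=
  fun i =>
    Fin.lastCases (motive := fun j : Fin (m + 1) => V j)
      (v ⟨m, by omega⟩ + d m (v ⟨m + 1, by omega⟩))
      (fun j => v ⟨j.val, by omega⟩) i

/-- Identity map `1_{(v_0,…,v_m)} = (v_0,…,v_m,0)`. -/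
def onemap (m : ℕ) (v : Cells V m) : Cells V (m + 1) := fun i =>
  Fin.lastCases (motive := fun j : Fin (m + 2) => V j) 0 (fun j => v ⟨j.val, by omega⟩) i

/-- Composition along a `p`-cell:
`(v ∘_p w)_i = v_i` for `i ≤ p` and `v_i + w_i` for `i > p`. -/
def compmap (p : ℕ) {m : ℕ} (v w : Cells V m) : Cells V m := fun i =>
  if (i : ℕ) ≤ p then v i else v i + w i

/-- One application of the source map (junk identity at level 0). -/
def sstep : ∀ m, Cells V m → Cells V (m - 1)
  | 0, v => v
  | (m + 1), v => smap m v

/-- One application of the target map (junk identity at level 0). -/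
def tstep (d : ∀ i, V (i + 1) →ₗ[K] V i) : ∀ m, Cells V m → Cells V (m - 1)
  | 0, v => v
  | (m + 1), v => tmap d m v

/-- Iterated source map `s^k : L_m → L_{m-k}`. -/
def sIter (m : ℕ) : ∀ k, Cells V m → Cells V (m - k)
  | 0, v => v
  | (k + 1), v => sstep (m - k) (sIter m k v)

/-- Iterated target map `t^k : L_m → L_{m-k}`. -/
def tIter (d : ∀ i, V (i + 1) →ₗ[K] V i) (m : ℕ) : ∀ k, Cells V m → Cells V (m - k)
  | 0, v => v
  | (k + 1), v => tstep d (m - k) (tIter d m k v)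

/-- Iterated identity map `1^k : L_j → L_{j+k}`. -/
def oneIter : ∀ (j k : ℕ), Cells V j → Cells V (j + k)
  | _, 0, v => v
  | j, (k + 1), v => onemap (j + k) (oneIter j k v)

/-- Cast between levels. -/
def castC {a b : ℕ} (h : a = b) (v : Cells V a) : Cells V b := h ▸ v

/-- Composability of two `m`-cells along a `p`-cell: `t^{m-p} v = s^{m-p} w`. -/
def Composable (d : ∀ i, V (i + 1) →ₗ[K] V i) (p : ℕ) {m : ℕ}
    (v w : Cells V m) : Prop :=
  tIter d m (m - p) v = sIter m (m - p) w

end GlobModel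

open GlobModel

namespace GlobModel

theorem sstep_mk {V : ℕ → Type} (m : ℕ) (v : Cells V m) {i : ℕ} (h : i < m - 1 + 1)
    (h' : i < m + 1) :
    sstep m v ⟨i, h⟩ = v ⟨i, h'⟩ := by
  cases m <;> rfl

theorem sIter_mk {V : ℕ → Type} (m k : ℕ) (v : Cells V m) {i : ℕ}
    (h : i < m - k + 1) :
    sIter m k v ⟨i, h⟩ = v ⟨i, by omega⟩ := by
  induction k with
  | zero => rfl
  | succ k ih => exact (sstep_mk (m - k) _ h (by omega)).trans (ih (by omega))

theorem castC_mk {V : ℕ → Type} {a b : ℕ} (e : a = b) (v : Cells V a) {i : ℕ}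
    (h : i < b + 1) :
    castC e v ⟨i, h⟩ = v ⟨i, by omega⟩ := by
  subst e
  rfl

section Components

variable {K : Type} [Field K] {V : ℕ → Type} [∀ i, AddCommGroup (V i)]
  [∀ i, Module K (V i)]

theorem tmap_last (d : ∀ i, V (i + 1) →ₗ[K] V i) (m : ℕ) (v : Cells V (m + 1)) :
    tmap d m v (Fin.last m) = v ⟨m, by omega⟩ + d m (v ⟨m + 1, by omega⟩) :=
  Fin.lastCases_last (motive := fun j : Fin (m + 1) => V j) ..

theorem tmap_castSucc (d : ∀ i, V (i + 1) →ₗ[K] V i) (m : ℕ) (v : Cells V (m + 1))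
    (j : Fin m) : tmap d m v j.castSucc = v ⟨j.val, by omega⟩ :=
  Fin.lastCases_castSucc (motive := fun j : Fin (m + 1) => V j) ..

theorem tmap_mk_of_lt (d : ∀ i, V (i + 1) →ₗ[K] V i) (m : ℕ) (v : Cells V (m + 1))
    {i : ℕ} (hi : i < m) : tmap d m v ⟨i, by omega⟩ = v ⟨i, by omega⟩ :=
  tmap_castSucc d m v ⟨i, hi⟩

theorem tmap_mk_self (d : ∀ i, V (i + 1) →ₗ[K] V i) (m : ℕ) (v : Cells V (m + 1))
    (h : m < m + 1) :
    tmap d m v ⟨m, h⟩ = v ⟨m, by omega⟩ + d m (v ⟨m + 1, by omega⟩) :=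
  tmap_last d m v

theorem onemap_last (m : ℕ) (v : Cells V m) : onemap m v (Fin.last (m + 1)) = 0 :=
  Fin.lastCases_last (motive := fun j : Fin (m + 2) => V j) ..

theorem onemap_castSucc (m : ℕ) (v : Cells V m) (j : Fin (m + 1)) :
    onemap m v j.castSucc = v j :=
  Fin.lastCases_castSucc (motive := fun j : Fin (m + 2) => V j) ..

theorem onemap_mk_of_lt (m : ℕ) (v : Cells V m) {i : ℕ} (hi : i < m + 1) :
    onemap m v ⟨i, by omega⟩ = v ⟨i, hi⟩ :=
  onemap_castSucc m v ⟨i, hi⟩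

theorem onemap_mk_self (m : ℕ) (v : Cells V m) (h : m + 1 < m + 2) :
    onemap m v ⟨m + 1, h⟩ = 0 :=
  onemap_last m v

theorem compmap_of_le {p m : ℕ} (v w : Cells V m) {i : Fin (m + 1)} (h : (i : ℕ) ≤ p) :
    compmap p v w i = v i :=
  if_pos h

theorem compmap_of_lt {p m : ℕ} (v w : Cells V m) {i : Fin (m + 1)} (h : p < (i : ℕ)) :
    compmap p v w i = v i + w i :=
  if_neg (not_le.mpr h)

theorem oneIter_mk_of_lt (j k : ℕ) (v : Cells V j) {i : ℕ} (hi : i < j + 1) :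
    oneIter j k v ⟨i, by omega⟩ = v ⟨i, hi⟩ := by
  induction k with
  | zero => rfl
  | succ k ih => exact (onemap_mk_of_lt (j + k) _ (by omega)).trans ih

theorem oneIter_mk_of_gt (j k : ℕ) (v : Cells V j) {i : ℕ} (hi : j < i)
    (h : i < j + k + 1) : oneIter j k v ⟨i, h⟩ = 0 := by
  induction k with
  | zero => omega
  | succ k ih =>
    rcases Nat.lt_succ_iff_lt_or_eq.mp h with h' | rfl
    · exact (onemap_mk_of_lt (j + k) _ h').trans (ih h')
    · exact onemap_mk_self (j + k) _ h

theorem Composable.tmap_eq_smap {d : ∀ i, V (i + 1) →ₗ[K] V i} {m : ℕ}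
    {v w : Cells V (m + 1)} (h : Composable d m v w) : tmap d m v = smap m w := by
  unfold Composable at h
  rw [Nat.add_sub_cancel_left] at h
  exact h

theorem smap_onemap (m : ℕ) (v : Cells V m) : smap m (onemap m v) = v :=
  funext fun i => onemap_castSucc m v i

theorem smap_smap_eq_smap_tmap (d : ∀ i, V (i + 1) →ₗ[K] V i) (m : ℕ)
    (v : Cells V (m + 2)) : smap m (smap (m + 1) v) = smap m (tmap d (m + 1) v) :=
  funext fun i => (tmap_mk_of_lt d (m + 1) v i.isLt).symm

theorem tmap_smap_eq_tmap_tmap (d : ∀ i, V (i + 1) →ₗ[K] V i)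
    (hd : ∀ i (x : V (i + 2)), d i (d (i + 1) x) = 0) (m : ℕ) (v : Cells V (m + 2)) :
    tmap d m (smap (m + 1) v) = tmap d m (tmap d (m + 1) v) := by
  funext i
  refine Fin.lastCases ?_ (fun j => ?_) i
  · rw [tmap_last, tmap_last, tmap_mk_of_lt d (m + 1) v (Nat.lt_succ_self m),
      tmap_mk_self, map_add, hd, add_zero]
    rfl
  · rw [tmap_castSucc, tmap_castSucc, tmap_mk_of_lt d (m + 1) v (by omega)]
    rfl

theorem tmap_onemap (d : ∀ i, V (i + 1) →ₗ[K] V i) (m : ℕ) (v : Cells V m) :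
    tmap d m (onemap m v) = v := by
  funext i
  refine Fin.lastCases ?_ (fun j => ?_) i
  · rw [tmap_last, onemap_mk_self, map_zero, add_zero,
      onemap_mk_of_lt m v (Nat.lt_succ_self m)]
    rfl
  · rw [tmap_castSucc, onemap_mk_of_lt m v (by omega)]
    rfl

theorem compmap_add (p m : ℕ) (v v' w w' : Cells V m) :
    compmap p (v + v') (w + w') = compmap p v w + compmap p v' w' := by
  funext i
  simp only [compmap, Pi.add_apply]
  split_ifs
  · rfl
  · exact add_add_add_comm ..

theorem compmap_smul (p m : ℕ) (k : K) (v w : Cells V m) :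
    compmap p (k • v) (k • w) = k • compmap p v w := by
  funext i
  simp only [compmap, Pi.smul_apply]
  split_ifs
  · rfl
  · exact (smul_add ..).symm

theorem smap_compmap_self (m : ℕ) (v w : Cells V (m + 1)) :
    smap m (compmap m v w) = smap m v :=
  funext fun i => compmap_of_le v w (Nat.le_of_lt_succ i.isLt)

theorem tmap_compmap_self (d : ∀ i, V (i + 1) →ₗ[K] V i) (m : ℕ) (v w : Cells V (m + 1))
    (h : Composable d m v w) : tmap d m (compmap m v w) = tmap d m w := by
  have key := h.tmap_eq_smap
  funext i
  refine Fin.lastCases ?_ (fun j => ?_) i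
  · have hl := congrFun key (Fin.last m)
    rw [tmap_last] at hl
    rw [tmap_last, tmap_last, compmap_of_le v w (i := ⟨m, by omega⟩) le_rfl,
      compmap_of_lt v w (i := ⟨m + 1, by omega⟩) (Nat.lt_succ_self m), map_add, ← add_assoc, hl]
    rfl
  · have hj := congrFun key j.castSucc
    rw [tmap_castSucc] at hj
    rw [tmap_castSucc, tmap_castSucc, compmap_of_le v w j.isLt.le, hj]
    rfl

theorem smap_compmap (p m : ℕ) (v w : Cells V (m + 1)) :
    smap m (compmap p v w) = compmap p (smap m v) (smap m w) :=
  rfl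

theorem tmap_compmap (d : ∀ i, V (i + 1) →ₗ[K] V i) {p m : ℕ} (hp : p < m)
    (v w : Cells V (m + 1)) :
    tmap d m (compmap p v w) = compmap p (tmap d m v) (tmap d m w) := by
  funext i
  refine Fin.lastCases ?_ (fun j => ?_) i
  · rw [compmap_of_lt (tmap d m v) _ hp, tmap_last, tmap_last, tmap_last,
      compmap_of_lt v w hp, compmap_of_lt v w (Nat.lt_succ_of_lt hp), map_add]
    exact add_add_add_comm ..
  · simp only [compmap, tmap_castSucc]
    rfl

theorem compmap_assoc (p m : ℕ) (u v w : Cells V m) :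
    compmap p (compmap p u v) w = compmap p u (compmap p v w) := by
  funext i
  simp only [compmap]
  split_ifs
  · rfl
  · exact add_assoc ..

theorem compmap_oneIter_sIter {p m : ℕ} (hp : p < m) (v : Cells V m)
    (e : m - (m - p) + (m - p) = m) :
    compmap p (castC e (oneIter (m - (m - p)) (m - p) (sIter m (m - p) v))) v = v := by
  funext ⟨i, hi⟩
  rcases le_or_gt i p with h | h
  · rw [compmap_of_le _ v h, castC_mk,
      oneIter_mk_of_lt _ _ _ (by omega : i < m - (m - p) + 1), sIter_mk]
  · rw [compmap_of_lt _ v h, castC_mk, oneIter_mk_of_gt _ _ _ (by omega), zero_add]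

theorem compmap_castC_oneIter {p m : ℕ} (hp : p < m) (v : Cells V m)
    (e : m - (m - p) + (m - p) = m) (u : Cells V (m - (m - p))) :
    compmap p v (castC e (oneIter (m - (m - p)) (m - p) u)) = v := by
  funext ⟨i, hi⟩
  rcases le_or_gt i p with h | h
  · exact compmap_of_le v _ h
  · rw [compmap_of_lt v _ h, castC_mk, oneIter_mk_of_gt _ _ _ (by omega), add_zero]

theorem compmap_interchange {q p m : ℕ} (hq : q < p) (a b c e : Cells V m) :
    compmap q (compmap p a b) (compmap p c e) =
      compmap p (compmap q a c) (compmap q b e) := by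
  funext i
  simp only [compmap]
  split_ifs
  · rfl
  · omega
  · rfl
  · exact add_add_add_comm ..

theorem onemap_compmap (p m : ℕ) (v w : Cells V m) :
    onemap m (compmap p v w) = compmap p (onemap m v) (onemap m w) := by
  funext i
  refine Fin.lastCases ?_ (fun j => ?_) i
  · simp only [compmap, onemap_last, add_zero, ite_self]
  · simp only [compmap, onemap_castSucc]
    rfl

end Components

end GlobModel

/-- Given vector spaces `V_0, …, V_n` and linear maps `d : V_m → V_{m-1}`
with `d ∘ d = 0`, the data `L_m = V_0 × ⋯ × V_m` with the explicit source, target,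
identity and composition maps form a linear n-category: the globular identities hold,
sources/targets of composites are as required, the compositions are linear on composable
pairs, associative and unital, the interchange law holds, and identities are compatible
with compositions. -/
theorem explicit_model_is_linear_n_category (K : Type) [Field K] (n : ℕ)
    (V : ℕ → Type) [∀ i, AddCommGroup (V i)] [∀ i, Module K (V i)]
    (d : ∀ i, V (i + 1) →ₗ[K] V i)
    (hd : ∀ i (x : V (i + 2)), d i (d (i + 1) x) = 0) :
    -- globular identities
    (∀ m (v : Cells V (m + 2)), smap m (smap (m + 1) v) = smap m (tmap d (m + 1) v)) ∧
    (∀ m (v : Cells V (m + 2)),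
        tmap d m (smap (m + 1) v) = tmap d m (tmap d (m + 1) v)) ∧
    -- identities have the right source and target
    (∀ m (v : Cells V m), smap m (onemap m v) = v) ∧
    (∀ m (v : Cells V m), tmap d m (onemap m v) = v) ∧
    -- the compositions are linear on composable pairs
    (∀ p m (v v' w w' : Cells V m), Composable d p v w → Composable d p v' w' →
        compmap p (v + v') (w + w') = compmap p v w + compmap p v' w') ∧
    (∀ p m (k : K) (v w : Cells V m), Composable d p v w →
        compmap p (k • v) (k • w) = k • compmap p v w) ∧
    -- source and target of a composite, case p = m-1
    (∀ m (v w : Cells V (m + 1)), Composable d m v w →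
        smap m (compmap m v w) = smap m v) ∧
    (∀ m (v w : Cells V (m + 1)), Composable d m v w →
        tmap d m (compmap m v w) = tmap d m w) ∧
    -- source and target of a composite, case p ≤ m-2
    (∀ p m, p < m → ∀ (v w : Cells V (m + 1)), Composable d p v w →
        smap m (compmap p v w) = compmap p (smap m v) (smap m w)) ∧
    (∀ p m, p < m → ∀ (v w : Cells V (m + 1)), Composable d p v w →
        tmap d m (compmap p v w) = compmap p (tmap d m v) (tmap d m w)) ∧
    -- associativity
    (∀ p m (u v w : Cells V m), Composable d p u v → Composable d p v w →
        compmap p (compmap p u v) w = compmap p u (compmap p v w)) ∧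
    -- unit laws
    (∀ p m, p < m → ∀ v : Cells V m,
        compmap p (castC (by omega : m - (m - p) + (m - p) = m)
          (oneIter (m - (m - p)) (m - p) (sIter m (m - p) v))) v = v) ∧
    (∀ p m, p < m → ∀ v : Cells V m,
        compmap p v (castC (by omega : m - (m - p) + (m - p) = m)
          (oneIter (m - (m - p)) (m - p) (tIter d m (m - p) v))) = v) ∧
    -- interchange law
    (∀ q p m, q < p → p < m → ∀ (a b c e : Cells V m),
        Composable d p a b → Composable d p c e →
        Composable d q a c → Composable d q b e →
        compmap q (compmap p a b) (compmap p c e) =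
          compmap p (compmap q a c) (compmap q b e)) ∧
    -- identities are compatible with compositions
    (∀ p m (v w : Cells V m), Composable d p v w →
        onemap m (compmap p v w) = compmap p (onemap m v) (onemap m w)) := by
  exact ⟨smap_smap_eq_smap_tmap d, tmap_smap_eq_tmap_tmap d hd, smap_onemap, tmap_onemap d,
    fun p m v v' w w' _ _ => compmap_add p m v v' w w',
    fun p m k v w _ => compmap_smul p m k v w,
    fun m v w _ => smap_compmap_self m v w,
    tmap_compmap_self d,
    fun p m _ v w _ => smap_compmap p m v w,
    fun _ _ hp v w _ => tmap_compmap d hp v w,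
    fun p m u v w _ _ => compmap_assoc p m u v w,
    fun _ _ hp v => compmap_oneIter_sIter hp v _,
    fun _ _ hp v => compmap_castC_oneIter hp v _ _,
    fun _ _ _ hq _ a b c e _ _ _ _ => compmap_interchange hq a b c e,
    fun p m v w _ => onemap_compmap p m v w⟩
end

section
/- Let d : V_1 → V_0 and d' : V'_1 → V'_0 be linear maps between K-vector spaces and let L, L' be the associated linear categories. On L_1 ⊗ L'_1 define S = s ⊗ s', T = t ⊗ t', identities 1_X = (1 ⊗ 1')(X) for X ∈ L_0 ⊗ L'_0, and composition X ∘ Y = X + Y − 1_{T(X)} whenever T(X) = S(Y) (the unique composition making these data a linear category L ⊠ L'). Then for all composable pairs (v,w) in L (t(v) = s(w)) and (v',w') in L' (t'(v') = s'(w')): (v ∘ w) ⊗ (v' ∘ w') = (v ⊗ v') ∘ (w ⊗ w') + (v − 1_{t(v)}) ⊗ (w' − 1_{s'(w')}) + (w − 1_{s(w)}) ⊗ (v' − 1_{t'(v')}). -/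
/- The linear category L associated with a linear map d : V₁ → V₀ has
   L₀ = V₀, L₁ = V₀ × V₁, s(v₀,v₁) = v₀, t(v₀,v₁) = v₀ + d v₁, 1ₓ = (x,0),
   and composition (v₀,v₁) ∘ (v₀ + d v₁, w₁) = (v₀, v₁ + w₁).
   On L ⊠ L' (cells L₀ ⊗ L'₀ and L₁ ⊗ L'₁, source s ⊗ s', target t ⊗ t',
   identities 1 ⊗ 1') the composition is X ∘ Y = X + Y − (1 ⊗ 1')((t ⊗ t')(X)). -/

namespace TwoTerm

open scoped TensorProduct

variable {K : Type} [Field K] {V0 V1 : Type} [AddCommGroup V0] [AddCommGroup V1]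
  [Module K V0] [Module K V1]

/-- Source map `s : L₁ → L₀`. -/
def sMap (K : Type) [Field K] (V0 V1 : Type) [AddCommGroup V0] [AddCommGroup V1]
    [Module K V0] [Module K V1] : (V0 × V1) →ₗ[K] V0 :=
  LinearMap.fst K V0 V1

/-- Target map `t : L₁ → L₀`, `t(v₀,v₁) = v₀ + d v₁`. -/
def tMap (d : V1 →ₗ[K] V0) : (V0 × V1) →ₗ[K] V0 :=
  LinearMap.fst K V0 V1 + d.comp (LinearMap.snd K V0 V1)

/-- Identity map `1 : L₀ → L₁`, `1ₓ = (x,0)`. -/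
def oneMap (K : Type) [Field K] (V0 V1 : Type) [AddCommGroup V0] [AddCommGroup V1]
    [Module K V0] [Module K V1] : V0 →ₗ[K] (V0 × V1) :=
  LinearMap.prod LinearMap.id 0

/-- Composition of composable 1-cells of `L`: `(v₀,v₁) ∘ (v₀ + d v₁, w₁) = (v₀, v₁ + w₁)`. -/
def lcomp (v w : V0 × V1) : V0 × V1 := (v.1, v.2 + w.2)

variable {V'0 V'1 : Type} [AddCommGroup V'0] [AddCommGroup V'1]
  [Module K V'0] [Module K V'1]

/-- Composition on the 1-cells `L₁ ⊗ L'₁` of `L ⊠ L'`: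
`X ∘ Y = X + Y − (1 ⊗ 1')((t ⊗ t')(X))`. -/
noncomputable def bcomp (d : V1 →ₗ[K] V0) (d' : V'1 →ₗ[K] V'0)
    (X Y : (V0 × V1) ⊗[K] (V'0 × V'1)) : (V0 × V1) ⊗[K] (V'0 × V'1) :=
  X + Y -
    TensorProduct.map (oneMap K V0 V1) (oneMap K V'0 V'1)
      (TensorProduct.map (tMap d) (tMap d') X)

end TwoTerm

open TwoTerm
open scoped TensorProduct

/-- The composite of a composable pair is `v ∘ w = v + w − 1_{t v}`. -/
theorem lcomp_eq_add_sub {K : Type} [Field K] {V0 V1 : Type} [AddCommGroup V0] [AddCommGroup V1]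
    [Module K V0] [Module K V1] (d : V1 →ₗ[K] V0) {v w : V0 × V1}
    (h : tMap d v = sMap K V0 V1 w) :
    lcomp v w = v + w - oneMap K V0 V1 (tMap d v) := by
  rw [h]
  ext <;> simp [lcomp, sMap, oneMap]

/-- For composable pairs `(v,w)` in `L` and `(v',w')` in `L'`:
`(v ∘ w) ⊗ (v' ∘ w') = (v ⊗ v') ∘ (w ⊗ w') + (v − 1_{t v}) ⊗ (w' − 1_{s' w'})
  + (w − 1_{s w}) ⊗ (v' − 1_{t' v'})`. -/
theorem tensor_of_composites (K : Type) [Field K]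
    (V0 V1 V'0 V'1 : Type) [AddCommGroup V0] [AddCommGroup V1]
    [AddCommGroup V'0] [AddCommGroup V'1]
    [Module K V0] [Module K V1] [Module K V'0] [Module K V'1]
    (d : V1 →ₗ[K] V0) (d' : V'1 →ₗ[K] V'0)
    (v w : V0 × V1) (v' w' : V'0 × V'1)
    (h : tMap d v = sMap K V0 V1 w) (h' : tMap d' v' = sMap K V'0 V'1 w') :
    lcomp v w ⊗ₜ[K] lcomp v' w' =
      bcomp d d' (v ⊗ₜ[K] v') (w ⊗ₜ[K] w') +
        (v - oneMap K V0 V1 (tMap d v)) ⊗ₜ[K] (w' - oneMap K V'0 V'1 (sMap K V'0 V'1 w')) +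
        (w - oneMap K V0 V1 (sMap K V0 V1 w)) ⊗ₜ[K] (v' - oneMap K V'0 V'1 (tMap d' v')) := by
  rw [lcomp_eq_add_sub d h, lcomp_eq_add_sub d' h', ← h, ← h']
  simp only [bcomp, TensorProduct.map_tmul, TensorProduct.add_tmul, TensorProduct.tmul_add,
    TensorProduct.sub_tmul, TensorProduct.tmul_sub]
  abel
end

section
/- There is a one-to-one correspondence between Lie 3-algebras (G(V), [−,−], J, μ) and 3-term Lie infinity algebras (V, ℓ_1, ℓ_2, ℓ_3, ℓ_4) whose bilinear map ℓ_2 vanishes on V_1 × V_1 and whose trilinear map ℓ_3 vanishes on triples of total degree 1. Under this correspondence ℓ_1 = d, the bracket is [(x,f,a),(y,g,b)] = (ℓ_2(x,y), ℓ_2(x,g) + ℓ_2(f, y + d g), ℓ_2(x,b) + ℓ_2(a,y)), the Jacobiator is J_{xyz} = ([[x,y],z], ℓ_3(x,y,z)), and the Identiator is μ_{xyzu} = ([[[x,y],z],u], h_{xyzu}, −ℓ_4(x,y,z,u)), where h_{xyzu} is the V_1-component of η_{xyzu}. -/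
/- The linear 2-category G(V) associated with a 3-term chain complex
   V₂ --d₂--> V₁ --d₁--> V₀ (d₁ ∘ d₂ = 0):
   L₀ = V₀, L₁ = V₀ × V₁, L₂ = V₀ × V₁ × V₂,
   s(v₀,…,v_m) = (v₀,…,v_{m-1}), t(v₀,…,v_m) = (v₀,…,v_{m-1} + d v_m),
   1_{(v₀,…,v_m)} = (v₀,…,v_m,0),
   (v₀,…,v_m) ∘_p (w₀,…,w_m) = (v₀,…,v_p, v_{p+1}+w_{p+1}, …, v_m+w_m). -/

namespace GV

variable {K : Type} [Field K] {V0 V1 V2 : Type}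
  [AddCommGroup V0] [AddCommGroup V1] [AddCommGroup V2]
  [Module K V0] [Module K V1] [Module K V2]

variable (d1 : V1 →ₗ[K] V0) (d2 : V2 →ₗ[K] V1)

/-- Source of a 1-cell. -/
def s1 (v : V0 × V1) : V0 := v.1

/-- Target of a 1-cell. -/
def t1 (v : V0 × V1) : V0 := v.1 + d1 v.2

/-- Source of a 2-cell. -/
def s2 (v : V0 × V1 × V2) : V0 × V1 := (v.1, v.2.1)

/-- Target of a 2-cell. -/
def t2 (v : V0 × V1 × V2) : V0 × V1 := (v.1, v.2.1 + d2 v.2.2)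

/-- Identity 1-cell on a 0-cell. -/
def one0 (x : V0) : V0 × V1 := (x, 0)

/-- Identity 2-cell on a 1-cell. -/
def one1 (v : V0 × V1) : V0 × V1 × V2 := (v.1, v.2, 0)

/-- Composition of 1-cells along a 0-cell. -/
def comp01 (v w : V0 × V1) : V0 × V1 := (v.1, v.2 + w.2)

/-- Composition of 2-cells along a 0-cell. -/
def comp02 (v w : V0 × V1 × V2) : V0 × V1 × V2 := (v.1, v.2.1 + w.2.1, v.2.2 + w.2.2)

/-- Composition of 2-cells along a 1-cell. -/
def comp12 (v w : V0 × V1 × V2) : V0 × V1 × V2 := (v.1, v.2.1, v.2.2 + w.2.2)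

/-- Composability of 1-cells along a 0-cell: `t v = s w`. -/
def Comp01 (v w : V0 × V1) : Prop := t1 d1 v = s1 w

/-- Composability of 2-cells along a 0-cell: `t² v = s² w`. -/
def Comp02 (v w : V0 × V1 × V2) : Prop := t1 d1 (t2 d2 v) = s1 (s2 w)

/-- Composability of 2-cells along a 1-cell: `t v = s w`. -/
def Comp12 (v w : V0 × V1 × V2) : Prop := t2 d2 v = s2 w


/-- A graded antisymmetric chain map `ℓ₂` of weight 0 on `V = (V₀,V₁,V₂)` which
vanishes on `V₁ × V₁`. -/
structure Ell2 (K : Type) [Field K] (V0 V1 V2 : Type)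
    [AddCommGroup V0] [AddCommGroup V1] [AddCommGroup V2]
    [Module K V0] [Module K V1] [Module K V2]
    (d1 : V1 →ₗ[K] V0) (d2 : V2 →ₗ[K] V1) : Type where
  l00 : V0 → V0 → V0
  l01 : V0 → V1 → V1
  l10 : V1 → V0 → V1
  l02 : V0 → V2 → V2
  l20 : V2 → V0 → V2
  l11 : V1 → V1 → V2
  bil00 : (∀ x, IsLinearMap K (l00 x)) ∧ (∀ y, IsLinearMap K (fun x => l00 x y))
  bil01 : (∀ x, IsLinearMap K (l01 x)) ∧ (∀ g, IsLinearMap K (fun x => l01 x g))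
  bil10 : (∀ f, IsLinearMap K (l10 f)) ∧ (∀ y, IsLinearMap K (fun f => l10 f y))
  bil02 : (∀ x, IsLinearMap K (l02 x)) ∧ (∀ b, IsLinearMap K (fun x => l02 x b))
  bil20 : (∀ a, IsLinearMap K (l20 a)) ∧ (∀ y, IsLinearMap K (fun a => l20 a y))
  bil11 : (∀ f, IsLinearMap K (l11 f)) ∧ (∀ g, IsLinearMap K (fun f => l11 f g))
  anti00 : ∀ x y, l00 x y = -l00 y x
  anti10 : ∀ f y, l10 f y = -l01 y f
  anti20 : ∀ a y, l20 a y = -l02 y a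
  anti11 : ∀ f g, l11 f g = l11 g f
  chain01 : ∀ x g, d1 (l01 x g) = l00 x (d1 g)
  chain10 : ∀ f y, d1 (l10 f y) = l00 (d1 f) y
  chain02 : ∀ x b, d2 (l02 x b) = l01 x (d2 b)
  chain20 : ∀ a y, d2 (l20 a y) = l10 (d2 a) y
  chain11 : ∀ f g, d2 (l11 f g) = l01 (d1 f) g - l10 f (d1 g)
  chain12 : ∀ f b, (0 : V2) = l02 (d1 f) b - l11 f (d2 b)
  vanish11 : ∀ f g, l11 f g = 0


variable {d1} {d2} in
/-- The bracket of 1-cells associated with `ℓ₂`: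
`[(x,f),(y,g)] = (ℓ₂(x,y), ℓ₂(x,g) + ℓ₂(f, y + d g))`. -/
def br1 (E : Ell2 K V0 V1 V2 d1 d2) (v w : V0 × V1) : V0 × V1 :=
  (E.l00 v.1 w.1, E.l01 v.1 w.2 + E.l10 v.2 (w.1 + d1 w.2))

variable {d1} {d2} in
/-- The bracket of 2-cells associated with `ℓ₂`:
`[(x,f,a),(y,g,b)] = (ℓ₂(x,y), ℓ₂(x,g) + ℓ₂(f, y + d g), ℓ₂(x,b) + ℓ₂(a,y))`. -/
def br2 (E : Ell2 K V0 V1 V2 d1 d2) (v w : V0 × V1 × V2) : V0 × V1 × V2 :=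
  (E.l00 v.1 w.1, E.l01 v.1 w.2.1 + E.l10 v.2.1 (w.1 + d1 w.2.1),
    E.l02 v.1 w.2.2 + E.l20 v.2.2 w.1)

end GV

namespace GV

/-- An antisymmetric bilinear 2-functor `[−,−] : G(V) × G(V) → G(V)`. -/
structure Bracket (K : Type) [Field K] (V0 V1 V2 : Type)
    [AddCommGroup V0] [AddCommGroup V1] [AddCommGroup V2]
    [Module K V0] [Module K V1] [Module K V2]
    (d1 : V1 →ₗ[K] V0) (d2 : V2 →ₗ[K] V1) : Type where
  B0 : V0 → V0 → V0
  B1 : V0 × V1 → V0 × V1 → V0 × V1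
  B2 : V0 × V1 × V2 → V0 × V1 × V2 → V0 × V1 × V2
  bil0 : (∀ x, IsLinearMap K (B0 x)) ∧ (∀ y, IsLinearMap K (fun x => B0 x y))
  bil1 : (∀ v, IsLinearMap K (B1 v)) ∧ (∀ w, IsLinearMap K (fun v => B1 v w))
  bil2 : (∀ v, IsLinearMap K (B2 v)) ∧ (∀ w, IsLinearMap K (fun v => B2 v w))
  anti0 : ∀ x y, B0 x y = -B0 y x
  anti1 : ∀ v w, B1 v w = -B1 w v
  anti2 : ∀ v w, B2 v w = -B2 w v
  maps_s1 : ∀ v w, s1 (B1 v w) = B0 (s1 v) (s1 w)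
  maps_t1 : ∀ v w, t1 d1 (B1 v w) = B0 (t1 d1 v) (t1 d1 w)
  maps_s2 : ∀ v w, s2 (B2 v w) = B1 (s2 v) (s2 w)
  maps_t2 : ∀ v w, t2 d2 (B2 v w) = B1 (t2 d2 v) (t2 d2 w)
  maps_one0 : ∀ x y, B1 (one0 x) (one0 y) = one0 (B0 x y)
  maps_one1 : ∀ v w, B2 (one1 v) (one1 w) = one1 (B1 v w)
  maps_comp01 : ∀ v v' w w', Comp01 d1 v v' → Comp01 d1 w w' →
      B1 (comp01 v v') (comp01 w w') = comp01 (B1 v w) (B1 v' w')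
  maps_comp02 : ∀ v v' w w', Comp02 d1 d2 v v' → Comp02 d1 d2 w w' →
      B2 (comp02 v v') (comp02 w w') = comp02 (B2 v w) (B2 v' w')
  maps_comp12 : ∀ v v' w w', Comp12 d2 v v' → Comp12 d2 w w' →
      B2 (comp12 v v') (comp12 w w') = comp12 (B2 v w) (B2 v' w')


end GV

namespace GV

variable {K : Type} [Field K] {V0 V1 V2 : Type}
  [AddCommGroup V0] [AddCommGroup V1] [AddCommGroup V2]
  [Module K V0] [Module K V1] [Module K V2]
  {d1 : V1 →ₗ[K] V0} {d2 : V2 →ₗ[K] V1}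

/-- An antisymmetric trilinear map `ℓ₃ : V₀³ → V₁` satisfying the L∞ condition `n = 3`
(for its weight-1 graded antisymmetric extension by zero in total degree ≥ 1). -/
structure Ell3 (E : Ell2 K V0 V1 V2 d1 d2) : Type where
  l3 : V0 → V0 → V0 → V1
  tri : (∀ x y, IsLinearMap K (l3 x y)) ∧
    (∀ x z, IsLinearMap K (fun y => l3 x y z)) ∧
    (∀ y z, IsLinearMap K (fun x => l3 x y z))
  anti12 : ∀ x y z, l3 x y z = -l3 y x z
  anti23 : ∀ x y z, l3 x y z = -l3 x z y
  cond1 : ∀ x y z, d1 (l3 x y z) + E.l00 (E.l00 x y) z - E.l00 (E.l00 x z) y +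
      E.l00 (E.l00 y z) x = 0
  cond2 : ∀ x y f, E.l01 (E.l00 x y) f - E.l10 (E.l01 x f) y + E.l10 (E.l01 y f) x +
      l3 (d1 f) x y = 0
  cond3 : ∀ x y a, E.l02 (E.l00 x y) a - E.l20 (E.l02 x a) y + E.l20 (E.l02 y a) x = 0

/-- A Jacobiator: a skew-symmetric trilinear natural 2-transformation
`[[−,−],•] ⇒ [[−,•],−] + [−,[−,•]]`. -/
structure Jacobiator (E : Ell2 K V0 V1 V2 d1 d2) : Type where
  J : V0 → V0 → V0 → V0 × V1
  tri : (∀ x y, IsLinearMap K (J x y)) ∧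
    (∀ x z, IsLinearMap K (fun y => J x y z)) ∧
    (∀ y z, IsLinearMap K (fun x => J x y z))
  src : ∀ x y z, (J x y z).1 = E.l00 (E.l00 x y) z
  tgt : ∀ x y z, t1 d1 (J x y z) = E.l00 (E.l00 x z) y + E.l00 x (E.l00 y z)
  anti12 : ∀ x y z, (J x y z).2 = -(J y x z).2
  anti23 : ∀ x y z, (J x y z).2 = -(J x z y).2
  nat3 : ∀ (x y z : V0) (f : V1) (a : V2),
      comp02 (br2 E (br2 E (x, 0, 0) (y, 0, 0)) (z, f, a))
          (one1 (J x y (t1 d1 (t2 d2 (z, f, a))))) =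
        comp02 (one1 (J x y z))
          (br2 E (br2 E (x, 0, 0) (z, f, a)) (y, 0, 0) +
            br2 E (x, 0, 0) (br2 E (y, 0, 0) (z, f, a)))
  nat1 : ∀ (x y z : V0) (f : V1) (a : V2),
      comp02 (br2 E (br2 E (x, f, a) (y, 0, 0)) (z, 0, 0))
          (one1 (J (t1 d1 (t2 d2 (x, f, a))) y z)) =
        comp02 (one1 (J x y z))
          (br2 E (br2 E (x, f, a) (z, 0, 0)) (y, 0, 0) +
            br2 E (x, f, a) (br2 E (y, 0, 0) (z, 0, 0)))
  nat2 : ∀ (x y z : V0) (f : V1) (a : V2),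
      comp02 (br2 E (br2 E (x, 0, 0) (y, f, a)) (z, 0, 0))
          (one1 (J x (t1 d1 (t2 d2 (y, f, a))) z)) =
        comp02 (one1 (J x y z))
          (br2 E (br2 E (x, 0, 0) (z, 0, 0)) (y, f, a) +
            br2 E (x, 0, 0) (br2 E (y, f, a) (z, 0, 0)))

end GV

namespace GV

variable {K : Type} [Field K] {V0 V1 V2 : Type}
  [AddCommGroup V0] [AddCommGroup V1] [AddCommGroup V2]
  [Module K V0] [Module K V1] [Module K V2]
  {d1 : V1 →ₗ[K] V0} {d2 : V2 →ₗ[K] V1}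

/-- The Jacobiator 1-cell associated with `ℓ₃`: `J_{xyz} = ([[x,y],z], ℓ₃(x,y,z))`. -/
def Jc (E : Ell2 K V0 V1 V2 d1 d2) (T : Ell3 E) (x y z : V0) : V0 × V1 :=
  (E.l00 (E.l00 x y) z, T.l3 x y z)

/-- The 1-cell
`η_{xyzu} = [J_{xyz},1_u] ∘₀ (J_{[x,z],y,u} + J_{x,[y,z],u}) ∘₀ ([J_{xzu},1_y] + 1)
  ∘₀ ([1_x,J_{yzu}] + 1)`, the unlabelled identity 1-cells being determined by
composability. -/
def eta (E : Ell2 K V0 V1 V2 d1 d2) (T : Ell3 E) (x y z u : V0) : V0 × V1 :=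
  let g1 := br1 E (Jc E T x y z) (one0 u)
  let g2 := Jc E T (E.l00 x z) y u + Jc E T x (E.l00 y z) u
  let N3 := br1 E (Jc E T x z u) (one0 y)
  let g3 := N3 + one0 (t1 d1 g2 - N3.1)
  let N4 := br1 E (one0 x) (Jc E T y z u)
  let g4 := N4 + one0 (t1 d1 g3 - N4.1)
  comp01 (comp01 (comp01 g1 g2) g3) g4

/-- The 1-cell
`ε_{xyzu} = J_{[x,y],z,u} ∘₀ ([J_{xyu},1_z] + 1)
  ∘₀ (J_{x,[y,u],z} + J_{[x,u],y,z} + J_{x,y,[z,u]})`. -/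
def eps (E : Ell2 K V0 V1 V2 d1 d2) (T : Ell3 E) (x y z u : V0) : V0 × V1 :=
  let g1 := Jc E T (E.l00 x y) z u
  let N2 := br1 E (Jc E T x y u) (one0 z)
  let g2 := N2 + one0 (t1 d1 g1 - N2.1)
  let g3 := Jc E T x (E.l00 y u) z + Jc E T (E.l00 x u) y z + Jc E T x y (E.l00 z u)
  comp01 (comp01 g1 g2) g3

/-- The quadrilinear 2-functor `F`, `F(α,β,γ,δ) = [[[α,β],γ],δ]`, on 2-cells. -/
def Fq (E : Ell2 K V0 V1 V2 d1 d2) (a b c d : V0 × V1 × V2) : V0 × V1 × V2 :=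
  br2 E (br2 E (br2 E a b) c) d

/-- The quadrilinear 2-functor `G`,
`G(α,β,γ,δ) = [α,[[β,δ],γ]] + [α,[β,[γ,δ]]] + [[[α,δ],γ],β] + [[α,[γ,δ]],β]
  + [[α,γ],[β,δ]] + [[α,δ],[β,γ]]`, on 2-cells. -/
def Gq (E : Ell2 K V0 V1 V2 d1 d2) (a b c d : V0 × V1 × V2) : V0 × V1 × V2 :=
  br2 E a (br2 E (br2 E b d) c) + br2 E a (br2 E b (br2 E c d)) +
    br2 E (br2 E (br2 E a d) c) b + br2 E (br2 E a (br2 E c d)) b +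
    br2 E (br2 E a c) (br2 E b d) + br2 E (br2 E a d) (br2 E b c)

/-- An antisymmetric quadrilinear map `ℓ₄ : V₀⁴ → V₂` satisfying the L∞ condition
`n = 4` (in the form `d ℓ₄(x,y,z,u) − h_{xyzu} + e_{xyzu} = 0`, `ℓ₄(d f,x,y,z) = 0`). -/
structure Ell4 (E : Ell2 K V0 V1 V2 d1 d2) (T : Ell3 E) : Type where
  l4 : V0 → V0 → V0 → V0 → V2
  quad : (∀ x y z, IsLinearMap K (l4 x y z)) ∧
    (∀ x y u, IsLinearMap K (fun z => l4 x y z u)) ∧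
    (∀ x z u, IsLinearMap K (fun y => l4 x y z u)) ∧
    (∀ y z u, IsLinearMap K (fun x => l4 x y z u))
  anti12 : ∀ x y z u, l4 x y z u = -l4 y x z u
  anti23 : ∀ x y z u, l4 x y z u = -l4 x z y u
  anti34 : ∀ x y z u, l4 x y z u = -l4 x y u z
  cond1 : ∀ x y z u,
      d2 (l4 x y z u) - (eta E T x y z u).2 + (eps E T x y z u).2 = 0
  cond2 : ∀ (f : V1) (x y z : V0), l4 (d1 f) x y z = 0

/-- An Identiator: a skew-symmetric quadrilinear 2-modification `μ : η ⇛ ε`. -/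
structure Identiator (E : Ell2 K V0 V1 V2 d1 d2) (T : Ell3 E) : Type where
  mu : V0 → V0 → V0 → V0 → V0 × V1 × V2
  quad : (∀ x y z, IsLinearMap K (mu x y z)) ∧
    (∀ x y u, IsLinearMap K (fun z => mu x y z u)) ∧
    (∀ x z u, IsLinearMap K (fun y => mu x y z u)) ∧
    (∀ y z u, IsLinearMap K (fun x => mu x y z u))
  src : ∀ x y z u, s2 (mu x y z u) = eta E T x y z u
  tgt : ∀ x y z u, t2 d2 (mu x y z u) = eps E T x y z u
  anti12 : ∀ x y z u, (mu x y z u).2.2 = -(mu y x z u).2.2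
  anti23 : ∀ x y z u, (mu x y z u).2.2 = -(mu x z y u).2.2
  anti34 : ∀ x y z u, (mu x y z u).2.2 = -(mu x y u z).2.2
  mod4 : ∀ (x y z u : V0) (f : V1) (a : V2),
      comp02 (Fq E (x, 0, 0) (y, 0, 0) (z, 0, 0) (u, f, a))
          (mu x y z (t1 d1 (t2 d2 (u, f, a)))) =
        comp02 (mu x y z u) (Gq E (x, 0, 0) (y, 0, 0) (z, 0, 0) (u, f, a))
  mod3 : ∀ (x y z u : V0) (f : V1) (a : V2),
      comp02 (Fq E (x, 0, 0) (y, 0, 0) (z, f, a) (u, 0, 0))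
          (mu x y (t1 d1 (t2 d2 (z, f, a))) u) =
        comp02 (mu x y z u) (Gq E (x, 0, 0) (y, 0, 0) (z, f, a) (u, 0, 0))
  mod2 : ∀ (x y z u : V0) (f : V1) (a : V2),
      comp02 (Fq E (x, 0, 0) (y, f, a) (z, 0, 0) (u, 0, 0))
          (mu x (t1 d1 (t2 d2 (y, f, a))) z u) =
        comp02 (mu x y z u) (Gq E (x, 0, 0) (y, f, a) (z, 0, 0) (u, 0, 0))
  mod1 : ∀ (x y z u : V0) (f : V1) (a : V2),
      comp02 (Fq E (x, f, a) (y, 0, 0) (z, 0, 0) (u, 0, 0))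
          (mu (t1 d1 (t2 d2 (x, f, a))) y z u) =
        comp02 (mu x y z u) (Gq E (x, f, a) (y, 0, 0) (z, 0, 0) (u, 0, 0))

end GV

namespace GV

variable {K : Type} [Field K] {V0 V1 V2 : Type}
  [AddCommGroup V0] [AddCommGroup V1] [AddCommGroup V2]
  [Module K V0] [Module K V1] [Module K V2]
  {d1 : V1 →ₗ[K] V0} {d2 : V2 →ₗ[K] V1}

/-- The squared target `t²` of a 2-cell. -/
def tt2 (d1 : V1 →ₗ[K] V0) (d2 : V2 →ₗ[K] V1) (v : V0 × V1 × V2) : V0 :=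
  t1 d1 (t2 d2 v)

/-- Pad a sum `N` of 2-cells by the identity 2-cell `1²_c` on the 0-cell `c`
determined by composability with the previous factor `prev`. -/
def pad2 (d1 : V1 →ₗ[K] V0) (d2 : V2 →ₗ[K] V1) (prev N : V0 × V1 × V2) :
    V0 × V1 × V2 :=
  N + (tt2 d1 d2 prev - N.1, 0, 0)

/-- The inverse `α⁻¹ = (A, r + d a, −a)` of a 2-cell `α = (A, r, a)` for `∘₁`. -/
def inv2 (d2 : V2 →ₗ[K] V1) (a : V0 × V1 × V2) : V0 × V1 × V2 :=
  (a.1, a.2.1 + d2 a.2.2, -a.2.2)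

/-- The Identiator 2-cell associated with `ℓ₄`:
`μ_{xyzu} = ([[[x,y],z],u], h_{xyzu}, −ℓ₄(x,y,z,u))`. -/
def muc (E : Ell2 K V0 V1 V2 d1 d2) (T : Ell3 E) (Q : Ell4 E T) (x y z u : V0) :
    V0 × V1 × V2 :=
  ((eta E T x y z u).1, (eta E T x y z u).2, -Q.l4 x y z u)

/-- The 2-cell `α₁`. -/
def alpha1 (E : Ell2 K V0 V1 V2 d1 d2) (T : Ell3 E) (Q : Ell4 E T)
    (x y z u v : V0) : V0 × V1 × V2 :=
  let f1 := one1 (Jc E T (E.l00 (E.l00 x y) z) u v)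
  let f2 := muc E T Q x y z (E.l00 u v) + br2 E (muc E T Q x y z v) (one1 (one0 u))
  let N3 := one1 (br1 E (Jc E T x (E.l00 z v) y) (one0 u) +
    br1 E (Jc E T (E.l00 x v) z y) (one0 u) + br1 E (Jc E T x z (E.l00 y v)) (one0 u))
  let f3 := pad2 d1 d2 f2 N3
  let N4 := muc E T Q (E.l00 x v) y z u + muc E T Q x (E.l00 y v) z u +
    muc E T Q x y (E.l00 z v) u
  let f4 := pad2 d1 d2 f3 N4
  comp02 (comp02 (comp02 f1 f2) f3) f4

/-- The 2-cell `α₄`. -/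
def alpha4 (E : Ell2 K V0 V1 V2 d1 d2) (T : Ell3 E) (Q : Ell4 E T)
    (x y z u v : V0) : V0 × V1 × V2 :=
  let f1 := br2 E (muc E T Q x y z u) (one1 (one0 v))
  let N2 := one1 (br1 E (Jc E T (E.l00 x u) z y) (one0 v) +
    br1 E (Jc E T x z (E.l00 y u)) (one0 v) + br1 E (Jc E T x (E.l00 z u) y) (one0 v))
  let f2 := pad2 d1 d2 f1 N2
  let f3 := muc E T Q (E.l00 x u) y z v + muc E T Q x (E.l00 y u) z v +
    muc E T Q x y (E.l00 z u) v
  let N4 := one1 (br1 E (br1 E (Jc E T x u v) (one0 z)) (one0 y) +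
    br1 E (Jc E T x u v) (one0 (E.l00 y z)) +
    br1 E (one0 x) (br1 E (Jc E T y u v) (one0 z)) +
    br1 E (br1 E (one0 x) (Jc E T z u v)) (one0 y) +
    br1 E (one0 x) (br1 E (one0 y) (Jc E T z u v)) +
    br1 E (one0 (E.l00 x z)) (Jc E T y u v))
  let f4 := pad2 d1 d2 f3 N4
  comp02 (comp02 (comp02 f1 f2) f3) f4

/-- The 2-cell `α₃`. -/
def alpha3 (E : Ell2 K V0 V1 V2 d1 d2) (T : Ell3 E) (Q : Ell4 E T)
    (x y z u v : V0) : V0 × V1 × V2 :=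
  let f1 := muc E T Q (E.l00 x y) z u v
  let N2 := one1 (br1 E (Jc E T (E.l00 x y) v u) (one0 z))
  let f2 := pad2 d1 d2 f1 N2
  let N3 := br2 E (muc E T Q x y u v) (one1 (one0 z))
  let f3 := pad2 d1 d2 f2 N3
  let f4 := one1 (br1 E (Jc E T x y v) (one0 (E.l00 z u)) +
    Jc E T x y (E.l00 (E.l00 z v) u) + Jc E T x y (E.l00 z (E.l00 u v)) +
    Jc E T (E.l00 (E.l00 x v) u) y z + Jc E T (E.l00 x v) (E.l00 y u) z +
    Jc E T (E.l00 x u) (E.l00 y v) z + Jc E T x (E.l00 (E.l00 y v) u) z +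
    Jc E T (E.l00 x (E.l00 u v)) y z + Jc E T x (E.l00 y (E.l00 u v)) z +
    br1 E (Jc E T x y u) (one0 (E.l00 z v)))
  let N5 := one1 (Jc E T x (E.l00 y v) (E.l00 z u) +
    Jc E T (E.l00 x v) y (E.l00 z u) + Jc E T x (E.l00 y u) (E.l00 z v) +
    Jc E T (E.l00 x u) y (E.l00 z v))
  let f5 := pad2 d1 d2 f4 N5
  comp02 (comp02 (comp02 (comp02 f1 f2) f3) f4) f5

/-- The 2-cell `α₂`. -/
def alpha2 (E : Ell2 K V0 V1 V2 d1 d2) (T : Ell3 E) (Q : Ell4 E T)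
    (x y z u v : V0) : V0 × V1 × V2 :=
  let f1 := one1 (br1 E (br1 E (Jc E T x y z) (one0 u)) (one0 v))
  let f2 := muc E T Q (E.l00 x z) y u v + muc E T Q x (E.l00 y z) u v
  let N3 := one1 (br1 E (one0 x) (Jc E T (E.l00 y z) v u) +
    br1 E (Jc E T (E.l00 x z) v u) (one0 y))
  let f3 := pad2 d1 d2 f2 N3
  let N4 := br2 E (one1 (one0 x)) (muc E T Q y z u v) +
    br2 E (muc E T Q x z u v) (one1 (one0 y))
  let f4 := pad2 d1 d2 f3 N4
  let N5 := one1 (br1 E (Jc E T x z v) (one0 (E.l00 y u)) +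
    br1 E (Jc E T x z u) (one0 (E.l00 y v)) +
    br1 E (one0 (E.l00 x v)) (Jc E T y z u) +
    br1 E (one0 (E.l00 x u)) (Jc E T y z v))
  let f5 := pad2 d1 d2 f4 N5
  comp02 (comp02 (comp02 (comp02 f1 f2) f3) f4) f5

end GV

namespace GV

variable {K : Type} [Field K] {V0 V1 V2 : Type}
  [AddCommGroup V0] [AddCommGroup V1] [AddCommGroup V2]
  [Module K V0] [Module K V1] [Module K V2]

/-- `η_{xyzu}` built from an abstract bracket and Jacobiator. -/
def etaG (d1 : V1 →ₗ[K] V0) (B0 : V0 → V0 → V0)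
    (B1 : V0 × V1 → V0 × V1 → V0 × V1) (J : V0 → V0 → V0 → V0 × V1)
    (x y z u : V0) : V0 × V1 :=
  let g1 := B1 (J x y z) (one0 u)
  let g2 := J (B0 x z) y u + J x (B0 y z) u
  let N3 := B1 (J x z u) (one0 y)
  let g3 := N3 + one0 (t1 d1 g2 - N3.1)
  let N4 := B1 (one0 x) (J y z u)
  let g4 := N4 + one0 (t1 d1 g3 - N4.1)
  comp01 (comp01 (comp01 g1 g2) g3) g4

/-- `ε_{xyzu}` built from an abstract bracket and Jacobiator. -/
def epsG (d1 : V1 →ₗ[K] V0) (B0 : V0 → V0 → V0)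
    (B1 : V0 × V1 → V0 × V1 → V0 × V1) (J : V0 → V0 → V0 → V0 × V1)
    (x y z u : V0) : V0 × V1 :=
  let g1 := J (B0 x y) z u
  let N2 := B1 (J x y u) (one0 z)
  let g2 := N2 + one0 (t1 d1 g1 - N2.1)
  let g3 := J x (B0 y u) z + J (B0 x u) y z + J x y (B0 z u)
  comp01 (comp01 g1 g2) g3

/-- The 2-functor `F` on 2-cells, for an abstract bracket. -/
def FqG (B2 : V0 × V1 × V2 → V0 × V1 × V2 → V0 × V1 × V2)
    (a b c d : V0 × V1 × V2) : V0 × V1 × V2 :=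
  B2 (B2 (B2 a b) c) d

/-- The 2-functor `G` on 2-cells, for an abstract bracket. -/
def GqG (B2 : V0 × V1 × V2 → V0 × V1 × V2 → V0 × V1 × V2)
    (a b c d : V0 × V1 × V2) : V0 × V1 × V2 :=
  B2 a (B2 (B2 b d) c) + B2 a (B2 b (B2 c d)) + B2 (B2 (B2 a d) c) b +
    B2 (B2 a (B2 c d)) b + B2 (B2 a c) (B2 b d) + B2 (B2 a d) (B2 b c)

variable (d1 : V1 →ₗ[K] V0) (d2 : V2 →ₗ[K] V1)
  (B0 : V0 → V0 → V0) (B1 : V0 × V1 → V0 × V1 → V0 × V1)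
  (B2 : V0 × V1 × V2 → V0 × V1 × V2 → V0 × V1 × V2)
  (J : V0 → V0 → V0 → V0 × V1) (mu : V0 → V0 → V0 → V0 → V0 × V1 × V2)

/-- The 2-cell `α₁`, for an abstract bracket, Jacobiator and Identiator. -/
def alpha1G (x y z u v : V0) : V0 × V1 × V2 :=
  let f1 := one1 (J (B0 (B0 x y) z) u v)
  let f2 := mu x y z (B0 u v) + B2 (mu x y z v) (one1 (one0 u))
  let N3 := one1 (B1 (J x (B0 z v) y) (one0 u) + B1 (J (B0 x v) z y) (one0 u) +
    B1 (J x z (B0 y v)) (one0 u))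
  let f3 := pad2 d1 d2 f2 N3
  let N4 := mu (B0 x v) y z u + mu x (B0 y v) z u + mu x y (B0 z v) u
  let f4 := pad2 d1 d2 f3 N4
  comp02 (comp02 (comp02 f1 f2) f3) f4

/-- The 2-cell `α₄`, for an abstract bracket, Jacobiator and Identiator. -/
def alpha4G (x y z u v : V0) : V0 × V1 × V2 :=
  let f1 := B2 (mu x y z u) (one1 (one0 v))
  let N2 := one1 (B1 (J (B0 x u) z y) (one0 v) + B1 (J x z (B0 y u)) (one0 v) +
    B1 (J x (B0 z u) y) (one0 v))
  let f2 := pad2 d1 d2 f1 N2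
  let f3 := mu (B0 x u) y z v + mu x (B0 y u) z v + mu x y (B0 z u) v
  let N4 := one1 (B1 (B1 (J x u v) (one0 z)) (one0 y) + B1 (J x u v) (one0 (B0 y z)) +
    B1 (one0 x) (B1 (J y u v) (one0 z)) + B1 (B1 (one0 x) (J z u v)) (one0 y) +
    B1 (one0 x) (B1 (one0 y) (J z u v)) + B1 (one0 (B0 x z)) (J y u v))
  let f4 := pad2 d1 d2 f3 N4
  comp02 (comp02 (comp02 f1 f2) f3) f4

/-- The 2-cell `α₃`, for an abstract bracket, Jacobiator and Identiator. -/
def alpha3G (x y z u v : V0) : V0 × V1 × V2 :=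
  let f1 := mu (B0 x y) z u v
  let N2 := one1 (B1 (J (B0 x y) v u) (one0 z))
  let f2 := pad2 d1 d2 f1 N2
  let N3 := B2 (mu x y u v) (one1 (one0 z))
  let f3 := pad2 d1 d2 f2 N3
  let f4 := one1 (B1 (J x y v) (one0 (B0 z u)) + J x y (B0 (B0 z v) u) +
    J x y (B0 z (B0 u v)) + J (B0 (B0 x v) u) y z + J (B0 x v) (B0 y u) z +
    J (B0 x u) (B0 y v) z + J x (B0 (B0 y v) u) z + J (B0 x (B0 u v)) y z +
    J x (B0 y (B0 u v)) z + B1 (J x y u) (one0 (B0 z v)))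
  let N5 := one1 (J x (B0 y v) (B0 z u) + J (B0 x v) y (B0 z u) +
    J x (B0 y u) (B0 z v) + J (B0 x u) y (B0 z v))
  let f5 := pad2 d1 d2 f4 N5
  comp02 (comp02 (comp02 (comp02 f1 f2) f3) f4) f5

/-- The 2-cell `α₂`, for an abstract bracket, Jacobiator and Identiator. -/
def alpha2G (x y z u v : V0) : V0 × V1 × V2 :=
  let f1 := one1 (B1 (B1 (J x y z) (one0 u)) (one0 v))
  let f2 := mu (B0 x z) y u v + mu x (B0 y z) u v
  let N3 := one1 (B1 (one0 x) (J (B0 y z) v u) + B1 (J (B0 x z) v u) (one0 y))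
  let f3 := pad2 d1 d2 f2 N3
  let N4 := B2 (one1 (one0 x)) (mu y z u v) + B2 (mu x z u v) (one1 (one0 y))
  let f4 := pad2 d1 d2 f3 N4
  let N5 := one1 (B1 (J x z v) (one0 (B0 y u)) + B1 (J x z u) (one0 (B0 y v)) +
    B1 (one0 (B0 x v)) (J y z u) + B1 (one0 (B0 x u)) (J y z v))
  let f5 := pad2 d1 d2 f4 N5
  comp02 (comp02 (comp02 (comp02 f1 f2) f3) f4) f5

/-- A 3-term Lie infinity algebra on `(V, d)` whose `ℓ₂` vanishes on `V₁ × V₁` and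
whose `ℓ₃` vanishes on triples of total degree 1. -/
structure LInfty3 (K : Type) [Field K] (V0 V1 V2 : Type)
    [AddCommGroup V0] [AddCommGroup V1] [AddCommGroup V2]
    [Module K V0] [Module K V1] [Module K V2]
    (d1 : V1 →ₗ[K] V0) (d2 : V2 →ₗ[K] V1) : Type where
  E2 : Ell2 K V0 V1 V2 d1 d2
  T3 : Ell3 E2
  l4 : V0 → V0 → V0 → V0 → V2
  quad : (∀ x y z, IsLinearMap K (l4 x y z)) ∧
    (∀ x y u, IsLinearMap K (fun z => l4 x y z u)) ∧
    (∀ x z u, IsLinearMap K (fun y => l4 x y z u)) ∧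
    (∀ y z u, IsLinearMap K (fun x => l4 x y z u))
  anti12 : ∀ x y z u, l4 x y z u = -l4 y x z u
  anti23 : ∀ x y z u, l4 x y z u = -l4 x z y u
  anti34 : ∀ x y z u, l4 x y z u = -l4 x y u z
  cond4a : ∀ x y z u,
      d2 (l4 x y z u) - E2.l10 (T3.l3 x y z) u + E2.l10 (T3.l3 x y u) z -
        E2.l10 (T3.l3 x z u) y + E2.l10 (T3.l3 y z u) x +
        T3.l3 (E2.l00 x y) z u - T3.l3 (E2.l00 x z) y u + T3.l3 (E2.l00 x u) y z +
        T3.l3 (E2.l00 y z) x u - T3.l3 (E2.l00 y u) x z + T3.l3 (E2.l00 z u) x y = 0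
  cond4b : ∀ (f : V1) (x y z : V0), l4 (d1 f) x y z = 0
  cond5 : ∀ x y z u v,
      E2.l20 (l4 x y z u) v - E2.l20 (l4 x y z v) u + E2.l20 (l4 x y u v) z -
        E2.l20 (l4 x z u v) y + E2.l20 (l4 y z u v) x +
        l4 (E2.l00 x y) z u v - l4 (E2.l00 x z) y u v + l4 (E2.l00 x u) y z v -
        l4 (E2.l00 x v) y z u + l4 (E2.l00 y z) x u v - l4 (E2.l00 y u) x z v +
        l4 (E2.l00 y v) x z u + l4 (E2.l00 z u) x y v - l4 (E2.l00 z v) x y u +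
        l4 (E2.l00 u v) x y z = 0

/-- A Lie 3-algebra on `G(V)`: an antisymmetric bilinear 2-functor (bracket), a
Jacobiator `J`, an Identiator `μ`, and the coherence law. -/
structure Lie3 (K : Type) [Field K] (V0 V1 V2 : Type)
    [AddCommGroup V0] [AddCommGroup V1] [AddCommGroup V2]
    [Module K V0] [Module K V1] [Module K V2]
    (d1 : V1 →ₗ[K] V0) (d2 : V2 →ₗ[K] V1) : Type where
  Br : Bracket K V0 V1 V2 d1 d2
  J : V0 → V0 → V0 → V0 × V1
  Jtri : (∀ x y, IsLinearMap K (J x y)) ∧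
    (∀ x z, IsLinearMap K (fun y => J x y z)) ∧
    (∀ y z, IsLinearMap K (fun x => J x y z))
  Jsrc : ∀ x y z, (J x y z).1 = Br.B0 (Br.B0 x y) z
  Jtgt : ∀ x y z, t1 d1 (J x y z) = Br.B0 (Br.B0 x z) y + Br.B0 x (Br.B0 y z)
  Janti12 : ∀ x y z, (J x y z).2 = -(J y x z).2
  Janti23 : ∀ x y z, (J x y z).2 = -(J x z y).2
  Jnat3 : ∀ (x y z : V0) (f : V1) (a : V2),
      comp02 (Br.B2 (Br.B2 (x, 0, 0) (y, 0, 0)) (z, f, a))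
          (one1 (J x y (t1 d1 (t2 d2 (z, f, a))))) =
        comp02 (one1 (J x y z))
          (Br.B2 (Br.B2 (x, 0, 0) (z, f, a)) (y, 0, 0) +
            Br.B2 (x, 0, 0) (Br.B2 (y, 0, 0) (z, f, a)))
  Jnat1 : ∀ (x y z : V0) (f : V1) (a : V2),
      comp02 (Br.B2 (Br.B2 (x, f, a) (y, 0, 0)) (z, 0, 0))
          (one1 (J (t1 d1 (t2 d2 (x, f, a))) y z)) =
        comp02 (one1 (J x y z))
          (Br.B2 (Br.B2 (x, f, a) (z, 0, 0)) (y, 0, 0) +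
            Br.B2 (x, f, a) (Br.B2 (y, 0, 0) (z, 0, 0)))
  Jnat2 : ∀ (x y z : V0) (f : V1) (a : V2),
      comp02 (Br.B2 (Br.B2 (x, 0, 0) (y, f, a)) (z, 0, 0))
          (one1 (J x (t1 d1 (t2 d2 (y, f, a))) z)) =
        comp02 (one1 (J x y z))
          (Br.B2 (Br.B2 (x, 0, 0) (z, 0, 0)) (y, f, a) +
            Br.B2 (x, 0, 0) (Br.B2 (y, f, a) (z, 0, 0)))
  mu : V0 → V0 → V0 → V0 → V0 × V1 × V2
  muquad : (∀ x y z, IsLinearMap K (mu x y z)) ∧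
    (∀ x y u, IsLinearMap K (fun z => mu x y z u)) ∧
    (∀ x z u, IsLinearMap K (fun y => mu x y z u)) ∧
    (∀ y z u, IsLinearMap K (fun x => mu x y z u))
  musrc : ∀ x y z u, s2 (mu x y z u) = etaG d1 Br.B0 Br.B1 J x y z u
  mutgt : ∀ x y z u, t2 d2 (mu x y z u) = epsG d1 Br.B0 Br.B1 J x y z u
  muanti12 : ∀ x y z u, (mu x y z u).2.2 = -(mu y x z u).2.2
  muanti23 : ∀ x y z u, (mu x y z u).2.2 = -(mu x z y u).2.2
  muanti34 : ∀ x y z u, (mu x y z u).2.2 = -(mu x y u z).2.2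
  mumod4 : ∀ (x y z u : V0) (f : V1) (a : V2),
      comp02 (FqG Br.B2 (x, 0, 0) (y, 0, 0) (z, 0, 0) (u, f, a))
          (mu x y z (t1 d1 (t2 d2 (u, f, a)))) =
        comp02 (mu x y z u) (GqG Br.B2 (x, 0, 0) (y, 0, 0) (z, 0, 0) (u, f, a))
  mumod3 : ∀ (x y z u : V0) (f : V1) (a : V2),
      comp02 (FqG Br.B2 (x, 0, 0) (y, 0, 0) (z, f, a) (u, 0, 0))
          (mu x y (t1 d1 (t2 d2 (z, f, a))) u) =
        comp02 (mu x y z u) (GqG Br.B2 (x, 0, 0) (y, 0, 0) (z, f, a) (u, 0, 0))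
  mumod2 : ∀ (x y z u : V0) (f : V1) (a : V2),
      comp02 (FqG Br.B2 (x, 0, 0) (y, f, a) (z, 0, 0) (u, 0, 0))
          (mu x (t1 d1 (t2 d2 (y, f, a))) z u) =
        comp02 (mu x y z u) (GqG Br.B2 (x, 0, 0) (y, f, a) (z, 0, 0) (u, 0, 0))
  mumod1 : ∀ (x y z u : V0) (f : V1) (a : V2),
      comp02 (FqG Br.B2 (x, f, a) (y, 0, 0) (z, 0, 0) (u, 0, 0))
          (mu (t1 d1 (t2 d2 (x, f, a))) y z u) =
        comp02 (mu x y z u) (GqG Br.B2 (x, f, a) (y, 0, 0) (z, 0, 0) (u, 0, 0))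
  coherence : ∀ x y z u v : V0,
      alpha1G d1 d2 Br.B0 Br.B1 Br.B2 J mu x y z u v + inv2 d2 (alpha4G d1 d2 Br.B0 Br.B1 Br.B2 J mu x y z u v) =
        alpha3G d1 d2 Br.B0 Br.B1 Br.B2 J mu x y z u v + inv2 d2 (alpha2G d1 d2 Br.B0 Br.B1 Br.B2 J mu x y z u v)

end GV

namespace GV

variable {K : Type} [Field K] {V0 V1 V2 : Type}
  [AddCommGroup V0] [AddCommGroup V1] [AddCommGroup V2]
  [Module K V0] [Module K V1] [Module K V2]
  {d1 : V1 →ₗ[K] V0} {d2 : V2 →ₗ[K] V1}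

section bundled

/-- A bilinear map given by two `IsLinearMap` facts, as a bundled map. -/
def bundle₂ {M N P : Type} [AddCommGroup M] [AddCommGroup N] [AddCommGroup P]
    [Module K M] [Module K N] [Module K P] (f : M → N → P)
    (h : (∀ x, IsLinearMap K (f x)) ∧ (∀ y, IsLinearMap K (fun x => f x y))) :
    M →ₗ[K] N →ₗ[K] P :=
  LinearMap.mk₂ K f (fun _ _ y => (h.2 y).map_add _ _) (fun _ _ y => (h.2 y).map_smul _ _)
    (fun x => (h.1 x).map_add) (fun c x => (h.1 x).map_smul c)

/-- The bracket `V₀ × V₀ → V₀`, bundled. -/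
def Ell2.bra (E : Ell2 K V0 V1 V2 d1 d2) : V0 →ₗ[K] V0 →ₗ[K] V0 := bundle₂ E.l00 E.bil00

/-- The action `V₀ × V₁ → V₁`, bundled. -/
def Ell2.act₁ (E : Ell2 K V0 V1 V2 d1 d2) : V0 →ₗ[K] V1 →ₗ[K] V1 := bundle₂ E.l01 E.bil01

/-- The action `V₀ × V₂ → V₂`, bundled. -/
def Ell2.act₂ (E : Ell2 K V0 V1 V2 d1 d2) : V0 →ₗ[K] V2 →ₗ[K] V2 := bundle₂ E.l02 E.bil02

variable (E : Ell2 K V0 V1 V2 d1 d2)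

theorem Ell2.l00_eq (x y : V0) : E.l00 x y = E.bra x y := rfl

theorem Ell2.l01_eq (x : V0) (f : V1) : E.l01 x f = E.act₁ x f := rfl

theorem Ell2.l02_eq (x : V0) (a : V2) : E.l02 x a = E.act₂ x a := rfl

theorem Ell2.l10_eq (f : V1) (x : V0) : E.l10 f x = -E.act₁ x f := E.anti10 f x

theorem Ell2.l20_eq (a : V2) (x : V0) : E.l20 a x = -E.act₂ x a := E.anti20 a x

theorem Ell2.bra_comm (x y : V0) : E.bra x y = -E.bra y x := E.anti00 x y

theorem Ell2.d1_act₁ (x : V0) (f : V1) : d1 (E.act₁ x f) = E.bra x (d1 f) := E.chain01 x f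

theorem Ell2.d2_act₂ (x : V0) (a : V2) : d2 (E.act₂ x a) = E.act₁ x (d2 a) := E.chain02 x a

theorem Ell2.act₁_d1 (f g : V1) : E.act₁ (d1 f) g = -E.act₁ (d1 g) f := by
  have h := E.chain11 f g
  rw [E.vanish11, map_zero, E.l10_eq, E.l01_eq, sub_neg_eq_add] at h
  exact eq_neg_of_add_eq_zero_left h.symm

theorem Ell2.act₂_d1 (f : V1) (a : V2) : E.act₂ (d1 f) a = 0 := by
  have h := E.chain12 f a
  rw [E.vanish11, sub_zero] at h
  exact h.symm

theorem br1_eq (v w : V0 × V1) :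
    br1 E v w = (E.bra v.1 w.1, E.act₁ v.1 w.2 - E.act₁ (w.1 + d1 w.2) v.2) := by
  simp only [br1, E.l00_eq, E.l01_eq, E.l10_eq, sub_eq_add_neg]

theorem br2_eq (v w : V0 × V1 × V2) :
    br2 E v w = (E.bra v.1 w.1, E.act₁ v.1 w.2.1 - E.act₁ (w.1 + d1 w.2.1) v.2.1,
      E.act₂ v.1 w.2.2 - E.act₂ w.1 v.2.2) := by
  simp only [br2, E.l00_eq, E.l01_eq, E.l10_eq, E.l02_eq, E.l20_eq, sub_eq_add_neg]

end bundled

section bracket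

theorem isLinearMap_of_antisymm {M : Type} [AddCommGroup M] [Module K M] {f : M → M → M}
    (hf : ∀ v w, f v w = -f w v) (h : ∀ v, IsLinearMap K (f v)) :
    (∀ v, IsLinearMap K (f v)) ∧ ∀ w, IsLinearMap K (fun v => f v w) :=
  ⟨h, fun w =>
    ⟨fun v v' => by simp only [hf _ w, (h w).map_add, neg_add],
      fun c v => by simp only [hf _ w, (h w).map_smul, smul_neg]⟩⟩

theorem br1_comm (E : Ell2 K V0 V1 V2 d1 d2) (v w : V0 × V1) : br1 E v w = -br1 E w v := by
  simp only [br1_eq, Prod.neg_mk, E.bra_comm v.1, map_add, LinearMap.add_apply,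
    E.act₁_d1 v.2]
  congr 1
  abel

theorem br2_comm (E : Ell2 K V0 V1 V2 d1 d2) (v w : V0 × V1 × V2) : br2 E v w = -br2 E w v := by
  simp only [br2_eq, Prod.neg_mk, E.bra_comm v.1, map_add, LinearMap.add_apply,
    E.act₁_d1 v.2.1]
  congr 2 <;> abel

/-- The antisymmetric bilinear 2-functor associated with `ℓ₂`. -/
def Ell2.toBracket (E : Ell2 K V0 V1 V2 d1 d2) (hdd : ∀ a, d1 (d2 a) = 0) :
    Bracket K V0 V1 V2 d1 d2 where
  B0 := E.l00
  B1 := br1 E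
  B2 := br2 E
  bil0 := E.bil00
  bil1 := isLinearMap_of_antisymm (br1_comm E) fun v =>
    ⟨fun w w' => by
      simp only [br1_eq, Prod.fst_add, Prod.snd_add, map_add, LinearMap.add_apply,
        Prod.mk_add_mk]
      congr 1
      abel,
    fun c w => by
      simp only [br1_eq, Prod.smul_fst, Prod.smul_snd, map_add, map_smul,
        LinearMap.add_apply, LinearMap.smul_apply, Prod.smul_mk, smul_sub, smul_add]⟩
  bil2 := isLinearMap_of_antisymm (br2_comm E) fun v =>
    ⟨fun w w' => by
      simp only [br2_eq, Prod.fst_add, Prod.snd_add, map_add, LinearMap.add_apply,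
        Prod.mk_add_mk]
      congr 2 <;> abel,
    fun c w => by
      simp only [br2_eq, Prod.smul_fst, Prod.smul_snd, map_add, map_smul,
        LinearMap.add_apply, LinearMap.smul_apply, Prod.smul_mk, smul_sub, smul_add]⟩
  anti0 := E.anti00
  anti1 := br1_comm E
  anti2 := br2_comm E
  maps_s1 _ _ := rfl
  maps_t1 v w := by
    simp [br1_eq, t1, E.l00_eq, E.d1_act₁]
    rw [E.bra_comm _ (d1 v.2), E.bra_comm (d1 w.2) (d1 v.2)]
    abel
  maps_s2 _ _ := rfl
  maps_t2 v w := by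
    have h : ∀ a g, E.act₁ (d1 g) (d2 a) = 0 := fun a g => by
      rw [E.act₁_d1, hdd]; simp
    simp [br1_eq, br2_eq, t2, E.d2_act₂, hdd, h]
    abel
  maps_one0 x y := by simp [br1_eq, one0, E.l00_eq]
  maps_one1 v w := by simp [br1_eq, br2_eq, one1]
  maps_comp01 v v' w w' h h' := by
    simp only [Comp01, t1, s1] at h h'
    simp [br1_eq, comp01, ← h, ← h', E.act₁_d1 v.2 w'.2]
    abel
  maps_comp02 v v' w w' h h' := by
    simp only [Comp02, t1, t2, s1, s2, map_add, hdd, add_zero] at h h'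
    simp [br2_eq, comp02, ← h, ← h', E.act₁_d1 v.2.1 w'.2.1, E.act₂_d1]
    constructor <;> abel
  maps_comp12 v v' w w' h h' := by
    simp only [Comp12, t2, s2, Prod.ext_iff] at h h'
    simp [br2_eq, comp12, ← h, ← h']
    abel

namespace Bracket

variable (S : Bracket K V0 V1 V2 d1 d2)

theorem B1_zero_right (v : V0 × V1) : S.B1 v 0 = 0 := (S.bil1.1 v).map_zero

theorem B1_zero_left (v : V0 × V1) : S.B1 0 v = 0 := (S.bil1.2 v).map_zero

theorem B2_zero_right (v : V0 × V1 × V2) : S.B2 v 0 = 0 := (S.bil2.1 v).map_zero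

theorem B2_zero_left (v : V0 × V1 × V2) : S.B2 0 v = 0 := (S.bil2.2 v).map_zero

theorem B1_fst (v w : V0 × V1) : (S.B1 v w).1 = S.B0 v.1 w.1 := S.maps_s1 v w

theorem B2_fst (v w : V0 × V1 × V2) : (S.B2 v w).1 = S.B0 v.1 w.1 :=
  (congrArg Prod.fst (S.maps_s2 v w)).trans (S.B1_fst _ _)

theorem B2_snd_fst (v w : V0 × V1 × V2) :
    (S.B2 v w).2.1 = (S.B1 (v.1, v.2.1) (w.1, w.2.1)).2 :=
  congrArg Prod.snd (S.maps_s2 v w)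

theorem d1_B1 (v w : V0 × V1) :
    d1 (S.B1 v w).2 = S.B0 (v.1 + d1 v.2) (w.1 + d1 w.2) - S.B0 v.1 w.1 := by
  rw [← S.B1_fst]
  exact eq_sub_of_add_eq' (S.maps_t1 v w)

theorem d2_B2 (v w : V0 × V1 × V2) :
    d2 (S.B2 v w).2.2 =
      (S.B1 (v.1, v.2.1 + d2 v.2.2) (w.1, w.2.1 + d2 w.2.2)).2 -
        (S.B1 (v.1, v.2.1) (w.1, w.2.1)).2 := by
  rw [← S.B2_snd_fst]
  exact eq_sub_of_add_eq' (congrArg Prod.snd (S.maps_t2 v w))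

theorem B1_inr_inr (f g : V1) : S.B1 (0, f) (0, g) = S.B1 (d1 f, 0) (0, g) := by
  have h := S.maps_comp01 (0, f) (d1 f, 0) 0 (0, g) (by simp [Comp01, t1, s1])
    (by simp [Comp01, t1, s1])
  rw [S.B1_zero_right] at h
  refine Prod.ext ?_ ?_
  · simp only [S.B1_fst, (S.bil0.1 _).map_zero]
  · simpa [comp01] using congrArg Prod.snd h

theorem B1_inr_inr' (f g : V1) : (S.B1 (0, f) (0, g)).2 = (S.B1 (0, f) (d1 g, 0)).2 := by
  rw [S.anti1 (0, f), S.B1_inr_inr, S.anti1 (0, f)]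

/-- The bracket `[(0,f,0),(0,0,b)]` vanishes, as does `[(d f,0,0),(0,0,b)]`. -/
theorem B2_inr_inr (hdd : ∀ a, d1 (d2 a) = 0) (f : V1) (b : V2) :
    (S.B2 (0, f, 0) (0, 0, b)).2.2 = 0 ∧ (S.B2 (d1 f, 0, 0) (0, 0, b)).2.2 = 0 := by
  have h := S.maps_comp02 (0, f, 0) (d1 f, 0, 0) 0 (0, 0, b) (by simp [Comp02, t1, t2, s1, s2])
    (by simp [Comp02, t1, t2, s1, s2])
  have h' := S.maps_comp02 0 (0, f, 0) (0, 0, b) 0 (by simp [Comp02, t1, t2, s1, s2])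
    (by simp [Comp02, t1, t2, s1, s2, hdd])
  rw [S.B2_zero_right] at h h'
  rw [S.B2_zero_left] at h'
  have e : (S.B2 (0, f, 0) (0, 0, b)).2.2 = 0 := by
    simpa [comp02] using congrArg (fun v => v.2.2) h'
  refine ⟨e, ?_⟩
  have e' := congrArg (fun v => v.2.2) h
  simp only [comp02, Prod.fst_zero, Prod.snd_zero, zero_add, add_zero] at e'
  rw [← e', e]

theorem B2_inr_inr_inr (hdd : ∀ a, d1 (d2 a) = 0) (a b : V2) :
    (S.B2 (0, 0, a) (0, 0, b)).2.2 = 0 := by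
  have h := S.maps_comp12 (0, 0, a) (0, d2 a, 0) 0 (0, 0, b) (by simp [Comp12, t2, s2])
    (by simp [Comp12, t2, s2])
  simpa [comp12, S.B2_zero_right, (S.B2_inr_inr hdd _ _).1] using congrArg (fun v => v.2.2) h

/-- The bilinear map `ℓ₂` extracted from an antisymmetric bilinear 2-functor. -/
def toEll2 (hdd : ∀ a, d1 (d2 a) = 0) : Ell2 K V0 V1 V2 d1 d2 where
  l00 := S.B0
  l01 x g := (S.B1 (x, 0) (0, g)).2
  l10 f y := (S.B1 (0, f) (y, 0)).2
  l02 x b := (S.B2 (x, 0, 0) (0, 0, b)).2.2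
  l20 a y := (S.B2 (0, 0, a) (y, 0, 0)).2.2
  l11 _ _ := 0
  bil00 := S.bil0
  bil01 :=
    ⟨fun x => (LinearMap.snd K V0 V1 ∘ₗ (S.bil1.1 (x, 0)).mk' ∘ₗ LinearMap.inr K V0 V1).isLinear,
      fun g => (LinearMap.snd K V0 V1 ∘ₗ (S.bil1.2 (0, g)).mk' ∘ₗ LinearMap.inl K V0 V1).isLinear⟩
  bil10 :=
    ⟨fun f => (LinearMap.snd K V0 V1 ∘ₗ (S.bil1.1 (0, f)).mk' ∘ₗ LinearMap.inl K V0 V1).isLinear,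
      fun y => (LinearMap.snd K V0 V1 ∘ₗ (S.bil1.2 (y, 0)).mk' ∘ₗ LinearMap.inr K V0 V1).isLinear⟩
  bil02 :=
    ⟨fun x => (LinearMap.snd K V1 V2 ∘ₗ LinearMap.snd K V0 (V1 × V2) ∘ₗ
        (S.bil2.1 (x, 0, 0)).mk' ∘ₗ LinearMap.inr K V0 (V1 × V2) ∘ₗ
        LinearMap.inr K V1 V2).isLinear,
      fun b => (LinearMap.snd K V1 V2 ∘ₗ LinearMap.snd K V0 (V1 × V2) ∘ₗ
        (S.bil2.2 (0, 0, b)).mk' ∘ₗ LinearMap.inl K V0 (V1 × V2)).isLinear⟩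
  bil20 :=
    ⟨fun a => (LinearMap.snd K V1 V2 ∘ₗ LinearMap.snd K V0 (V1 × V2) ∘ₗ
        (S.bil2.1 (0, 0, a)).mk' ∘ₗ LinearMap.inl K V0 (V1 × V2)).isLinear,
      fun y => (LinearMap.snd K V1 V2 ∘ₗ LinearMap.snd K V0 (V1 × V2) ∘ₗ
        (S.bil2.2 (y, 0, 0)).mk' ∘ₗ LinearMap.inr K V0 (V1 × V2) ∘ₗ
        LinearMap.inr K V1 V2).isLinear⟩
  bil11 := ⟨fun _ => (0 : V1 →ₗ[K] V2).isLinear, fun _ => (0 : V1 →ₗ[K] V2).isLinear⟩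
  anti00 := S.anti0
  anti10 f y := by rw [S.anti1]; rfl
  anti20 a y := by rw [S.anti2]; rfl
  anti11 _ _ := rfl
  chain01 x g := by simp [S.d1_B1, (S.bil0.1 _).map_zero]
  chain10 f y := by simp [S.d1_B1, (S.bil0.2 _).map_zero]
  chain02 x b := by simp [S.d2_B2, show ((0 : V0), (0 : V1)) = 0 from rfl, S.B1_zero_right]
  chain20 a y := by simp [S.d2_B2, show ((0 : V0), (0 : V1)) = 0 from rfl, S.B1_zero_left]
  chain11 f g := by rw [map_zero, ← S.B1_inr_inr, S.B1_inr_inr', sub_self]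
  chain12 f b := by rw [(S.B2_inr_inr hdd f b).2, sub_zero]
  vanish11 _ _ := rfl

variable (hdd : ∀ a, d1 (d2 a) = 0)

theorem br1_toEll2 (v w : V0 × V1) : br1 (S.toEll2 hdd) v w = S.B1 v w := by
  obtain ⟨x, f⟩ := v
  obtain ⟨y, g⟩ := w
  refine Prod.ext (S.B1_fst _ _).symm ?_
  have hv : ((x, f) : V0 × V1) = (x, 0) + (0, f) := by simp
  have hw : ((y, g) : V0 × V1) = (y, 0) + (0, g) := by simp
  have h0 : (S.B1 (x, 0) (y, 0)).2 = 0 := congrArg Prod.snd (S.maps_one0 x y)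
  rw [hv, hw, (S.bil1.1 _).map_add, (S.bil1.2 _).map_add, (S.bil1.2 _).map_add]
  simp only [Prod.snd_add, h0, S.B1_inr_inr' f g, br1, Prod.fst_add, add_zero, zero_add,
    ((S.toEll2 hdd).bil10.1 f).map_add]
  simp only [toEll2]
  abel

theorem br2_toEll2 (v w : V0 × V1 × V2) : br2 (S.toEll2 hdd) v w = S.B2 v w := by
  obtain ⟨x, f, a⟩ := v
  obtain ⟨y, g, b⟩ := w
  refine Prod.ext (S.B2_fst _ _).symm (Prod.ext ?_ ?_)
  · rw [S.B2_snd_fst, ← S.br1_toEll2 hdd]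
    rfl
  have hv : ((x, f, a) : V0 × V1 × V2) = (x, 0, 0) + (0, f, 0) + (0, 0, a) := by simp
  have hw : ((y, g, b) : V0 × V1 × V2) = (y, 0, 0) + (0, g, 0) + (0, 0, b) := by simp
  have h0 : ∀ (x y : V0) (f g : V1), (S.B2 (x, f, 0) (y, g, 0)).2.2 = 0 := fun x y f g =>
    congrArg (fun v => v.2.2) (S.maps_one1 (x, f) (y, g))
  have h1 : (S.B2 (0, 0, a) (0, g, 0)).2.2 = 0 := by
    rw [S.anti2, Prod.snd_neg, Prod.snd_neg, (S.B2_inr_inr hdd g a).1, neg_zero]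
  rw [hv, hw]
  simp only [(S.bil2.1 _).map_add, (S.bil2.2 _).map_add, Prod.snd_add, h0, h1,
    (S.B2_inr_inr hdd f b).1, S.B2_inr_inr_inr hdd a b, br2, Prod.fst_add, add_zero, zero_add]
  exact add_comm _ _

theorem toBracket_toEll2 : (S.toEll2 hdd).toBracket hdd = S := by
  have h1 : br1 (S.toEll2 hdd) = S.B1 := funext₂ (S.br1_toEll2 hdd)
  have h2 : br2 (S.toEll2 hdd) = S.B2 := funext₂ (S.br2_toEll2 hdd)
  cases S
  simp only [Ell2.toBracket, h1, h2]
  rfl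

end Bracket

theorem Ell2.toEll2_toBracket (E : Ell2 K V0 V1 V2 d1 d2) (hdd : ∀ a, d1 (d2 a) = 0) :
    (E.toBracket hdd).toEll2 hdd = E := by
  have h01 : ∀ x g, (br1 E (x, 0) (0, g)).2 = E.l01 x g := by simp [br1_eq, E.l01_eq]
  have h10 : ∀ f y, (br1 E (0, f) (y, 0)).2 = E.l10 f y := by simp [br1_eq, E.l10_eq]
  have h02 : ∀ x b, (br2 E (x, 0, 0) (0, 0, b)).2.2 = E.l02 x b := by simp [br2_eq, E.l02_eq]
  have h20 : ∀ a y, (br2 E (0, 0, a) (y, 0, 0)).2.2 = E.l20 a y := by simp [br2_eq, E.l20_eq]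
  have h11 : E.l11 = fun _ _ => 0 := funext₂ E.vanish11
  simp only [Bracket.toEll2, toBracket, h01, h10, h02, h20]
  cases E
  cases h11
  rfl

theorem Ell2.toBracket_injective (hdd : ∀ a, d1 (d2 a) = 0) :
    Function.Injective (Ell2.toBracket (K := K) (V0 := V0) (V1 := V1) (V2 := V2) · hdd) :=
  Function.LeftInverse.injective (g := (Bracket.toEll2 · hdd)) (Ell2.toEll2_toBracket · hdd)

end bracket

section jacobiator

variable {E : Ell2 K V0 V1 V2 d1 d2}

namespace Ell3

variable (T : Ell3 E)

/-- The trilinear map `ℓ₃ : V₀³ → V₁`, bundled. -/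
def jac : V0 →ₗ[K] V0 →ₗ[K] V0 →ₗ[K] V1 :=
  LinearMap.mk₂ K (fun x y => (T.tri.1 x y).mk')
    (fun _ _ y => LinearMap.ext fun z => (T.tri.2.2 y z).map_add _ _)
    (fun _ _ y => LinearMap.ext fun z => (T.tri.2.2 y z).map_smul _ _)
    (fun x _ _ => LinearMap.ext fun z => (T.tri.2.1 x z).map_add _ _)
    (fun _ x _ => LinearMap.ext fun z => (T.tri.2.1 x z).map_smul _ _)

theorem l3_eq (x y z : V0) : T.l3 x y z = T.jac x y z := rfl

theorem jac_swap₁₂ (x y z : V0) : T.jac x y z = -T.jac y x z := T.anti12 x y z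

theorem jac_swap₂₃ (x y z : V0) : T.jac x y z = -T.jac x z y := T.anti23 x y z

theorem jac_rotate (x y z : V0) : T.jac x y z = T.jac z x y := by
  rw [T.jac_swap₂₃, T.jac_swap₁₂, neg_neg]

theorem d1_jac (x y z : V0) :
    d1 (T.jac x y z) = E.bra (E.bra x z) y + E.bra x (E.bra y z) - E.bra (E.bra x y) z := by
  have h := T.cond1 x y z
  simp only [l3_eq, E.l00_eq] at h
  rw [E.bra_comm x (E.bra y z), ← sub_eq_zero, ← h]
  abel

/-- The action of `V₀` on `V₁` is a representation up to `ℓ₃`. -/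
theorem act₁_bra (x y : V0) (f : V1) :
    E.act₁ (E.bra x y) f =
      E.act₁ x (E.act₁ y f) - E.act₁ y (E.act₁ x f) - T.jac (d1 f) x y := by
  have h := T.cond2 x y f
  simp only [l3_eq, E.l00_eq, E.l01_eq, E.l10_eq] at h
  rw [← sub_eq_zero, ← h]
  abel

theorem act₂_bra (T : Ell3 E) (x y : V0) (a : V2) :
    E.act₂ (E.bra x y) a = E.act₂ x (E.act₂ y a) - E.act₂ y (E.act₂ x a) := by
  have h := T.cond3 x y a
  simp only [E.l00_eq, E.l02_eq, E.l20_eq] at h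
  rw [← sub_eq_zero, ← h]
  abel

/-- The Jacobiator `J_{xyz} = ([[x,y],z], ℓ₃(x,y,z))`. -/
def toJacobiator (hdd : ∀ a, d1 (d2 a) = 0) : Jacobiator E where
  J := Jc E T
  tri := by
    refine ⟨fun x y => ⟨fun _ _ => ?_, fun _ _ => ?_⟩, fun x z => ⟨fun _ _ => ?_, fun _ _ => ?_⟩,
      fun y z => ⟨fun _ _ => ?_, fun _ _ => ?_⟩⟩ <;>
    simp [Jc, E.l00_eq, T.l3_eq]
  src _ _ _ := rfl
  tgt x y z := by simp [t1, Jc, T.l3_eq, E.l00_eq, T.d1_jac]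
  anti12 := T.anti12
  anti23 := T.anti23
  nat3 x y z f a := by
    simp [comp02, br2_eq, one1, Jc, t1, t2, hdd, E.l00_eq, T.l3_eq, T.act₁_bra, T.act₂_bra,
      T.jac_rotate x y (d1 f)]
    constructor <;> abel
  nat1 x y z f a := by
    simp [comp02, br2_eq, one1, Jc, t1, t2, hdd, E.l00_eq, T.l3_eq, T.act₁_bra, T.act₂_bra]
    abel
  nat2 x y z f a := by
    simp [comp02, br2_eq, one1, Jc, t1, t2, hdd, E.l00_eq, T.l3_eq, T.act₁_bra, T.act₂_bra,
      T.jac_swap₁₂ x (d1 f)]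
    constructor <;> abel

end Ell3

/-- The trilinear map `ℓ₃` extracted from a Jacobiator. -/
def Jacobiator.toEll3 (S : Jacobiator E) : Ell3 E where
  l3 x y z := (S.J x y z).2
  tri :=
    ⟨fun x y => (LinearMap.snd K V0 V1 ∘ₗ (S.tri.1 x y).mk').isLinear,
      fun x z => (LinearMap.snd K V0 V1 ∘ₗ (S.tri.2.1 x z).mk').isLinear,
      fun y z => (LinearMap.snd K V0 V1 ∘ₗ (S.tri.2.2 y z).mk').isLinear⟩
  anti12 := S.anti12
  anti23 := S.anti23
  cond1 x y z := by
    have h := S.tgt x y z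
    rw [t1, S.src] at h
    rw [add_comm (d1 _), h, E.anti00 (E.l00 y z)]
    abel
  cond2 x y f := by
    have h := congrArg (fun v => v.2.1) (S.nat1 0 x y f 0)
    have h0 : S.J 0 x y = 0 := (S.tri.2.2 x y).map_zero
    simp [comp02, br2_eq, one1, t1, t2, h0] at h
    simp [E.l00_eq, E.l01_eq, E.l10_eq]
    rw [← sub_eq_zero] at h
    rw [← h]
    abel
  cond3 x y a := by
    have h := congrArg (fun v => v.2.2) (S.nat1 0 x y 0 a)
    simp [comp02, br2_eq, one1, t1, t2] at h
    simp [E.l00_eq, E.l02_eq, E.l20_eq, h]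

theorem Jacobiator.Jc_toEll3 (S : Jacobiator E) : Jc E S.toEll3 = S.J :=
  funext₃ fun x y z => Prod.ext (S.src x y z).symm rfl

end jacobiator

section sorting

variable {E : Ell2 K V0 V1 V2 d1 d2} (T : Ell3 E) {n : ℕ} (w : Fin n → V0) {i j : Fin n}

theorem bra_sort (_ : j < i) : E.bra (w i) (w j) = -E.bra (w j) (w i) := E.bra_comm _ _

theorem bra_sort' (a b : V0) : E.bra (w i) (E.bra a b) = -E.bra (E.bra a b) (w i) :=
  E.bra_comm _ _

theorem jac_sort₁₂ (_ : j < i) (a : V0) : T.jac (w i) (w j) a = -T.jac (w j) (w i) a :=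
  T.jac_swap₁₂ _ _ _

theorem jac_sort₂₃ (_ : j < i) (a : V0) : T.jac a (w i) (w j) = -T.jac a (w j) (w i) :=
  T.jac_swap₂₃ _ _ _

theorem jac_sort₁₂' (a b c : V0) :
    T.jac (w i) (E.bra a b) c = -T.jac (E.bra a b) (w i) c :=
  T.jac_swap₁₂ _ _ _

theorem jac_sort₂₃' (a b c : V0) :
    T.jac c (w i) (E.bra a b) = -T.jac c (E.bra a b) (w i) :=
  T.jac_swap₂₃ _ _ _

end sorting

section identiator

variable {E : Ell2 K V0 V1 V2 d1 d2} {T : Ell3 E}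

theorem eta_snd (x y z u : V0) :
    (eta E T x y z u).2 = -E.act₁ u (T.jac x y z) + (T.jac (E.bra x z) y u +
      T.jac x (E.bra y z) u) - E.act₁ y (T.jac x z u) + E.act₁ x (T.jac y z u) := by
  simp [eta, comp01, br1_eq, Jc, one0, E.l00_eq, T.l3_eq, ← sub_eq_add_neg]

theorem eps_snd (x y z u : V0) :
    (eps E T x y z u).2 = T.jac (E.bra x y) z u - E.act₁ z (T.jac x y u) +
      (T.jac x (E.bra y u) z + T.jac (E.bra x u) y z + T.jac x y (E.bra z u)) := by
  simp [eps, comp01, br1_eq, Jc, one0, E.l00_eq, T.l3_eq, ← sub_eq_add_neg]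

theorem eta_fst (x y z u : V0) : (eta E T x y z u).1 = E.bra (E.bra (E.bra x y) z) u := rfl

namespace Ell4

variable (Q : Ell4 E T)

theorem d2_l4 (x y z u : V0) :
    d2 (Q.l4 x y z u) = (eta E T x y z u).2 - (eps E T x y z u).2 := by
  rw [← sub_eq_zero, ← Q.cond1 x y z u]
  abel

/-- The Identiator `μ_{xyzu} = ([[[x,y],z],u], h_{xyzu}, −ℓ₄(x,y,z,u))`. -/
def toIdentiator (hdd : ∀ a, d1 (d2 a) = 0) : Identiator E T where
  mu := muc E T Q
  quad := by
    obtain ⟨h4, h3, h2, h1⟩ := Q.quad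
    refine ⟨fun x y z => ⟨fun _ _ => ?_, fun _ _ => ?_⟩, fun x y u => ⟨fun _ _ => ?_, fun _ _ => ?_⟩,
      fun x z u => ⟨fun _ _ => ?_, fun _ _ => ?_⟩, fun y z u => ⟨fun _ _ => ?_, fun _ _ => ?_⟩⟩
    · simp [muc, eta_fst, eta_snd, (h4 _ _ _).map_add]
      constructor <;> abel
    · simp [muc, eta_fst, eta_snd, (h4 _ _ _).map_smul, smul_add, smul_sub]
    · simp [muc, eta_fst, eta_snd, (h3 _ _ _).map_add]
      constructor <;> abel
    · simp [muc, eta_fst, eta_snd, (h3 _ _ _).map_smul, smul_add, smul_sub]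
    · simp [muc, eta_fst, eta_snd, (h2 _ _ _).map_add]
      constructor <;> abel
    · simp [muc, eta_fst, eta_snd, (h2 _ _ _).map_smul, smul_add, smul_sub]
    · simp [muc, eta_fst, eta_snd, (h1 _ _ _).map_add]
      constructor <;> abel
    · simp [muc, eta_fst, eta_snd, (h1 _ _ _).map_smul, smul_add, smul_sub]
  src _ _ _ _ := rfl
  tgt x y z u := by
    refine Prod.ext rfl ?_
    simp [t2, muc, Q.d2_l4]
  anti12 x y z u := congrArg Neg.neg (Q.anti12 x y z u)
  anti23 x y z u := congrArg Neg.neg (Q.anti23 x y z u)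
  anti34 x y z u := congrArg Neg.neg (Q.anti34 x y z u)
  mod4 x y z u f a := by
    obtain ⟨w, rfl, rfl, rfl, hf⟩ : ∃ w : Fin 4 → V0, w 0 = x ∧ w 1 = y ∧ w 2 = z ∧ w 3 = d1 f :=
      ⟨![x, y, z, d1 f], rfl, rfl, rfl, rfl⟩
    have h : Q.l4 (w 0) (w 1) (w 2) (w 3) = 0 := by
      rw [Q.anti34, Q.anti23, Q.anti12, hf, Q.cond2, neg_zero, neg_zero, neg_zero]
    have hQ : Q.l4 (w 0) (w 1) (w 2) (u + w 3) = Q.l4 (w 0) (w 1) (w 2) u := by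
      rw [(Q.quad.1 _ _ _).map_add, h, add_zero]
    have hA : ∀ g, E.act₁ (w 3) g = -E.act₁ (d1 g) f := fun g => by rw [hf, E.act₁_d1]
    simp [comp02, Fq, Gq, muc, br2_eq, t1, t2, eta_fst, eta_snd, hdd, ← hf, hQ, hA, T.act₁_bra,
      T.act₂_bra, E.d1_act₁, T.d1_jac, bra_sort' w, jac_sort₁₂ T w, jac_sort₂₃ T w,
      jac_sort₁₂' T w]
    constructor <;> abel
  mod3 x y z u f a := by
    obtain ⟨w, rfl, rfl, hf, rfl⟩ : ∃ w : Fin 4 → V0, w 0 = x ∧ w 1 = y ∧ w 2 = d1 f ∧ w 3 = u :=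
      ⟨![x, y, d1 f, u], rfl, rfl, rfl, rfl⟩
    have h : Q.l4 (w 0) (w 1) (w 2) (w 3) = 0 := by
      rw [Q.anti23, Q.anti12, hf, Q.cond2, neg_zero, neg_zero]
    have hQ : Q.l4 (w 0) (w 1) (z + w 2) (w 3) = Q.l4 (w 0) (w 1) z (w 3) := by
      rw [(Q.quad.2.1 _ _ _).map_add, h, add_zero]
    have hA : ∀ g, E.act₁ (w 2) g = -E.act₁ (d1 g) f := fun g => by rw [hf, E.act₁_d1]
    simp [comp02, Fq, Gq, muc, br2_eq, t1, t2, eta_fst, eta_snd, hdd, ← hf, hQ, hA, T.act₁_bra,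
      T.act₂_bra, E.d1_act₁, T.d1_jac, bra_sort w, bra_sort' w, jac_sort₁₂ T w, jac_sort₂₃ T w,
      jac_sort₁₂' T w]
    constructor <;> abel
  mod2 x y z u f a := by
    obtain ⟨w, rfl, hf, rfl, rfl⟩ : ∃ w : Fin 4 → V0, w 0 = x ∧ w 1 = d1 f ∧ w 2 = z ∧ w 3 = u :=
      ⟨![x, d1 f, z, u], rfl, rfl, rfl, rfl⟩
    have h : Q.l4 (w 0) (w 1) (w 2) (w 3) = 0 := by
      rw [Q.anti12, hf, Q.cond2, neg_zero]
    have hQ : Q.l4 (w 0) (y + w 1) (w 2) (w 3) = Q.l4 (w 0) y (w 2) (w 3) := by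
      rw [(Q.quad.2.2.1 _ _ _).map_add, h, add_zero]
    have hA : ∀ g, E.act₁ (w 1) g = -E.act₁ (d1 g) f := fun g => by rw [hf, E.act₁_d1]
    simp [comp02, Fq, Gq, muc, br2_eq, t1, t2, eta_fst, eta_snd, hdd, ← hf, hQ, hA, T.act₁_bra,
      T.act₂_bra, E.d1_act₁, T.d1_jac, bra_sort w, bra_sort' w, jac_sort₁₂ T w, jac_sort₂₃ T w,
      jac_sort₁₂' T w]
    constructor <;> abel
  mod1 x y z u f a := by
    obtain ⟨w, hf, rfl, rfl, rfl⟩ : ∃ w : Fin 4 → V0, w 0 = d1 f ∧ w 1 = y ∧ w 2 = z ∧ w 3 = u :=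
      ⟨![d1 f, y, z, u], rfl, rfl, rfl, rfl⟩
    have h : Q.l4 (w 0) (w 1) (w 2) (w 3) = 0 := by
      rw [hf, Q.cond2]
    have hQ : Q.l4 (x + w 0) (w 1) (w 2) (w 3) = Q.l4 x (w 1) (w 2) (w 3) := by
      rw [(Q.quad.2.2.2 _ _ _).map_add, h, add_zero]
    have hA : ∀ g, E.act₁ (w 0) g = -E.act₁ (d1 g) f := fun g => by rw [hf, E.act₁_d1]
    simp [comp02, Fq, Gq, muc, br2_eq, t1, t2, eta_fst, eta_snd, hdd, ← hf, hQ, hA, T.act₁_bra,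
      T.act₂_bra, E.d1_act₁, T.d1_jac, bra_sort w, bra_sort' w, jac_sort₁₂' T w]
    constructor <;> abel

end Ell4

namespace Identiator

variable (S : Identiator E T)

/-- The quadrilinear map `ℓ₄` extracted from an Identiator. -/
def toEll4 : Ell4 E T where
  l4 x y z u := -(S.mu x y z u).2.2
  quad :=
    ⟨fun x y z => (-(LinearMap.snd K V1 V2 ∘ₗ LinearMap.snd K V0 (V1 × V2) ∘ₗ
        (S.quad.1 x y z).mk')).isLinear,
      fun x y u => (-(LinearMap.snd K V1 V2 ∘ₗ LinearMap.snd K V0 (V1 × V2) ∘ₗ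
        (S.quad.2.1 x y u).mk')).isLinear,
      fun x z u => (-(LinearMap.snd K V1 V2 ∘ₗ LinearMap.snd K V0 (V1 × V2) ∘ₗ
        (S.quad.2.2.1 x z u).mk')).isLinear,
      fun y z u => (-(LinearMap.snd K V1 V2 ∘ₗ LinearMap.snd K V0 (V1 × V2) ∘ₗ
        (S.quad.2.2.2 y z u).mk')).isLinear⟩
  anti12 x y z u := congrArg Neg.neg (S.anti12 x y z u)
  anti23 x y z u := congrArg Neg.neg (S.anti23 x y z u)
  anti34 x y z u := congrArg Neg.neg (S.anti34 x y z u)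
  cond1 x y z u := by
    have h := congrArg Prod.snd (S.tgt x y z u)
    rw [← h, ← S.src x y z u]
    simp only [s2, t2, map_neg]
    abel
  cond2 f x y z := by
    have h := congrArg (fun v => v.2.2) (S.mod1 0 x y z f 0)
    have h0 : S.mu 0 x y z = 0 := (S.quad.2.2.2 x y z).map_zero
    simpa [comp02, br2_eq, Fq, Gq, t1, t2, h0] using h

theorem muc_toEll4 : muc E T S.toEll4 = S.mu := by
  funext x y z u
  simp only [muc, ← S.src, toEll4, neg_neg]
  rfl

end Identiator

end identiator

section coherence

variable {E : Ell2 K V0 V1 V2 d1 d2} {T : Ell3 E} (Q : Ell4 E T)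

/-- The `V₁`-components of the two sides of the coherence law agree automatically. -/
theorem coherence_snd_fst (x y z u v : V0) :
    (alpha1 E T Q x y z u v).2.1 +
        ((alpha4 E T Q x y z u v).2.1 + d2 (alpha4 E T Q x y z u v).2.2) =
      (alpha3 E T Q x y z u v).2.1 +
        ((alpha2 E T Q x y z u v).2.1 + d2 (alpha2 E T Q x y z u v).2.2) := by
  obtain ⟨w, rfl, rfl, rfl, rfl, rfl⟩ : ∃ w : Fin 5 → V0,
      w 0 = x ∧ w 1 = y ∧ w 2 = z ∧ w 3 = u ∧ w 4 = v :=
    ⟨![x, y, z, u, v], rfl, rfl, rfl, rfl, rfl⟩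
  simp [alpha1, alpha2, alpha3, alpha4, comp02, one1, one0, pad2, muc, Jc, br1_eq, br2_eq,
    E.l00_eq, T.l3_eq, E.d2_act₂, Q.d2_l4, eta_snd, eps_snd]
  simp only [T.act₁_bra, T.d1_jac, map_add, map_sub, map_neg, LinearMap.add_apply,
    LinearMap.sub_apply, LinearMap.neg_apply, Fin.reduceLT,
    bra_sort' w, jac_sort₂₃ T w, jac_sort₁₂' T w, jac_sort₂₃' T w]
  abel

/-- The `V₂`-component of the coherence law is the `L∞` condition `n = 5`. -/
theorem coherence_snd_snd (x y z u v : V0) :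
    (alpha1 E T Q x y z u v).2.2 - (alpha4 E T Q x y z u v).2.2 -
        ((alpha3 E T Q x y z u v).2.2 - (alpha2 E T Q x y z u v).2.2) =
      E.l20 (Q.l4 x y z u) v - E.l20 (Q.l4 x y z v) u + E.l20 (Q.l4 x y u v) z -
        E.l20 (Q.l4 x z u v) y + E.l20 (Q.l4 y z u v) x +
        Q.l4 (E.l00 x y) z u v - Q.l4 (E.l00 x z) y u v + Q.l4 (E.l00 x u) y z v -
        Q.l4 (E.l00 x v) y z u + Q.l4 (E.l00 y z) x u v - Q.l4 (E.l00 y u) x z v +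
        Q.l4 (E.l00 y v) x z u + Q.l4 (E.l00 z u) x y v - Q.l4 (E.l00 z v) x y u +
        Q.l4 (E.l00 u v) x y z := by
  have h34 : ∀ a b c p q, Q.l4 a b c (E.bra p q) = -Q.l4 a b (E.bra p q) c := fun a b c p q =>
    Q.anti34 a b c _
  have h23 : ∀ a b c p q, Q.l4 a b (E.bra p q) c = -Q.l4 a (E.bra p q) b c := fun a b c p q =>
    Q.anti23 a b _ c
  have h12 : ∀ a b c p q, Q.l4 a (E.bra p q) b c = -Q.l4 (E.bra p q) a b c := fun a b c p q =>
    Q.anti12 a _ b c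
  simp [alpha1, alpha2, alpha3, alpha4, comp02, one1, one0, pad2, muc, br2_eq,
    E.l00_eq, E.l20_eq, h34, h23, h12]
  abel

theorem coherence_iff (x y z u v : V0) :
    alpha1 E T Q x y z u v + inv2 d2 (alpha4 E T Q x y z u v) =
        alpha3 E T Q x y z u v + inv2 d2 (alpha2 E T Q x y z u v) ↔
      E.l20 (Q.l4 x y z u) v - E.l20 (Q.l4 x y z v) u + E.l20 (Q.l4 x y u v) z -
        E.l20 (Q.l4 x z u v) y + E.l20 (Q.l4 y z u v) x +
        Q.l4 (E.l00 x y) z u v - Q.l4 (E.l00 x z) y u v + Q.l4 (E.l00 x u) y z v -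
        Q.l4 (E.l00 x v) y z u + Q.l4 (E.l00 y z) x u v - Q.l4 (E.l00 y u) x z v +
        Q.l4 (E.l00 y v) x z u + Q.l4 (E.l00 z u) x y v - Q.l4 (E.l00 z v) x y u +
        Q.l4 (E.l00 u v) x y z = 0 := by
  rw [← coherence_snd_snd, sub_eq_zero, sub_eq_add_neg, sub_eq_add_neg]
  exact ⟨congrArg fun w : V0 × V1 × V2 => w.2.2, fun h =>
    Prod.ext rfl (Prod.ext (coherence_snd_fst Q x y z u v) h)⟩

end coherence

section correspondence

namespace LInfty3

variable (A : LInfty3 K V0 V1 V2 d1 d2)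

/-- The quadrilinear map `ℓ₄` with the `n = 4` condition in the form `d ℓ₄ = h − e`. -/
def toEll4 : Ell4 A.E2 A.T3 where
  l4 := A.l4
  quad := A.quad
  anti12 := A.anti12
  anti23 := A.anti23
  anti34 := A.anti34
  cond1 x y z u := by
    have h := A.cond4a x y z u
    simp only [A.E2.l10_eq, A.E2.l00_eq, A.T3.l3_eq] at h
    rw [eta_snd, eps_snd, ← h, A.T3.jac_swap₁₂ x (A.E2.bra y z) u,
      A.T3.jac_swap₁₂ x (A.E2.bra y u) z, A.T3.jac_rotate x y (A.E2.bra z u)]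
    abel
  cond2 := A.cond4b

/-- The Lie 3-algebra associated with a 3-term Lie infinity algebra. -/
def toLie3 (hdd : ∀ a, d1 (d2 a) = 0) : Lie3 K V0 V1 V2 d1 d2 :=
  let j := A.T3.toJacobiator hdd
  let m := A.toEll4.toIdentiator hdd
  { Br := A.E2.toBracket hdd
    J := Jc A.E2 A.T3
    Jtri := j.tri
    Jsrc := j.src
    Jtgt := j.tgt
    Janti12 := j.anti12
    Janti23 := j.anti23
    Jnat3 := j.nat3
    Jnat1 := j.nat1
    Jnat2 := j.nat2
    mu := muc A.E2 A.T3 A.toEll4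
    muquad := m.quad
    musrc := m.src
    mutgt := m.tgt
    muanti12 := m.anti12
    muanti23 := m.anti23
    muanti34 := m.anti34
    mumod4 := m.mod4
    mumod3 := m.mod3
    mumod2 := m.mod2
    mumod1 := m.mod1
    coherence := fun x y z u v => (coherence_iff A.toEll4 x y z u v).2 (A.cond5 x y z u v) }

theorem toLie3_injective (hdd : ∀ a, d1 (d2 a) = 0) :
    Function.Injective (toLie3 (K := K) (V0 := V0) (V1 := V1) (V2 := V2) · hdd) := by
  rintro ⟨E, ⟨l3, _⟩, l4, _⟩ ⟨E', ⟨l3', _⟩, l4', _⟩ h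
  obtain rfl : E = E' := Ell2.toBracket_injective hdd (congrArg Lie3.Br h)
  obtain rfl : l3 = l3' := funext₃ fun x y z =>
    congrArg (fun L : Lie3 K V0 V1 V2 d1 d2 => (L.J x y z).2) h
  obtain rfl : l4 = l4' := by
    funext x y z u
    exact neg_injective (congrArg (fun L : Lie3 K V0 V1 V2 d1 d2 => (L.mu x y z u).2.2) h)
  rfl

theorem toLie3_surjective (hdd : ∀ a, d1 (d2 a) = 0) :
    Function.Surjective (toLie3 (K := K) (V0 := V0) (V1 := V1) (V2 := V2) · hdd) := by
  intro L
  obtain ⟨Br, J, Jtri, Jsrc, Jtgt, Janti12, Janti23, Jnat3, Jnat1, Jnat2, mu, muquad, musrc, mutgt,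
    muanti12, muanti23, muanti34, mumod4, mumod3, mumod2, mumod1, coherence⟩ := L
  obtain ⟨E, rfl⟩ : ∃ E : Ell2 K V0 V1 V2 d1 d2, E.toBracket hdd = Br :=
    ⟨_, Br.toBracket_toEll2 hdd⟩
  obtain ⟨T, rfl⟩ : ∃ T : Ell3 E, Jc E T = J :=
    ⟨_, Jacobiator.Jc_toEll3
      ⟨J, Jtri, Jsrc, Jtgt, Janti12, Janti23, Jnat3, Jnat1, Jnat2⟩⟩
  obtain ⟨Q, rfl⟩ : ∃ Q : Ell4 E T, muc E T Q = mu :=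
    ⟨_, Identiator.muc_toEll4
      ⟨mu, muquad, musrc, mutgt, muanti12, muanti23, muanti34, mumod4, mumod3, mumod2, mumod1⟩⟩
  refine ⟨⟨E, T, Q.l4, Q.quad, Q.anti12, Q.anti23, Q.anti34, fun x y z u => ?_, Q.cond2,
    fun x y z u v => (coherence_iff Q x y z u v).1 (coherence x y z u v)⟩, rfl⟩
  have h := Q.cond1 x y z u
  rw [eta_snd, eps_snd, T.jac_swap₁₂ x (E.bra y z) u, T.jac_swap₁₂ x (E.bra y u) z,
    T.jac_rotate x y (E.bra z u)] at h
  simp only [E.l10_eq, E.l00_eq, T.l3_eq]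
  rw [← h]
  abel

end LInfty3

end correspondence

end GV

open GV

/-- There is a one-to-one correspondence between Lie 3-algebras
`(G(V), [−,−], J, μ)` and 3-term Lie infinity algebras `(V, ℓ₁, ℓ₂, ℓ₃, ℓ₄)` whose
`ℓ₂` vanishes on `V₁ × V₁` and whose `ℓ₃` vanishes on triples of total degree 1.
Under the correspondence `ℓ₁ = d`, the bracket is
`[(x,f,a),(y,g,b)] = (ℓ₂(x,y), ℓ₂(x,g) + ℓ₂(f, y + d g), ℓ₂(x,b) + ℓ₂(a,y))`,
the Jacobiator is `J_{xyz} = ([[x,y],z], ℓ₃(x,y,z))`, and the Identiator is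
`μ_{xyzu} = ([[[x,y],z],u], h_{xyzu}, −ℓ₄(x,y,z,u))`. -/
theorem lie3_linfty3_correspondence (K : Type) [Field K]
    (V0 V1 V2 : Type) [AddCommGroup V0] [AddCommGroup V1] [AddCommGroup V2]
    [Module K V0] [Module K V1] [Module K V2]
    (d1 : V1 →ₗ[K] V0) (d2 : V2 →ₗ[K] V1) (hdd : ∀ a, d1 (d2 a) = 0) :
    ∃ Φ : LInfty3 K V0 V1 V2 d1 d2 ≃ Lie3 K V0 V1 V2 d1 d2,
      ∀ A : LInfty3 K V0 V1 V2 d1 d2,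
        ((∀ x y, (Φ A).Br.B0 x y = A.E2.l00 x y) ∧
         (∀ x f y g, (Φ A).Br.B1 (x, f) (y, g) =
            (A.E2.l00 x y, A.E2.l01 x g + A.E2.l10 f (y + d1 g))) ∧
         (∀ x f a y g b, (Φ A).Br.B2 (x, f, a) (y, g, b) =
            (A.E2.l00 x y, A.E2.l01 x g + A.E2.l10 f (y + d1 g),
              A.E2.l02 x b + A.E2.l20 a y))) ∧
        (∀ x y z, (Φ A).J x y z = (A.E2.l00 (A.E2.l00 x y) z, A.T3.l3 x y z)) ∧
        (∀ x y z u, (Φ A).mu x y z u =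
          ((eta A.E2 A.T3 x y z u).1, (eta A.E2 A.T3 x y z u).2, -A.l4 x y z u)) :=
  ⟨Equiv.ofBijective _ ⟨LInfty3.toLie3_injective hdd, LInfty3.toLie3_surjective hdd⟩,
    fun _ => ⟨⟨fun _ _ => rfl, fun _ _ _ _ => rfl, fun _ _ _ _ _ _ => rfl⟩,
      fun _ _ _ => rfl, fun _ _ _ _ => rfl⟩⟩
end
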